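/- arXiv:2509.12219 — 10 statements merged into one kernel-verified Lean document; each statement's English description precedes it below -/
import Mathlib

section
/- Let ABCD be an equidiagonal quadrilateral in the Euclidean plane, i.e. dist A C = dist B D, and let E be any point of the plane. Let F, G, H, I be the centroids of the radial triangles ABE, BCE, CDE, DAE respectively. Then FGHI is a rhombus: the midpoints of FH and GI coincide, and dist F G = dist G H = dist H I = dist I F. -/
/-! Each side of `FGHI` is a third of a diagonal of `ABCD`: `F - G = (A - C) / 3`,
`G - H = (B - D) / 3`, and the two remaining sides are opposite to these. So `FGHI` is always a
parallelogram, and all its sides are equal when the diagonals are. -/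

open scoped RealInnerProductSpace

/-- If `ABCD` is an equidiagonal quadrilateral (`dist A C = dist B D`) and `E`
is any point of the plane, the central quadrilateral `FGHI` of centroids of the
radial triangles is a rhombus. -/
theorem centroid_central_quadrilateral_rhombus_of_equidiagonal
    (A B C D E F G H I : EuclideanSpace ℝ (Fin 2))
    (hdiag : dist A C = dist B D)
    (hF : F = (3⁻¹ : ℝ) • (A + B + E))
    (hG : G = (3⁻¹ : ℝ) • (B + C + E))
    (hH : H = (3⁻¹ : ℝ) • (C + D + E))
    (hI : I = (3⁻¹ : ℝ) • (D + A + E)) :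
    midpoint ℝ F H = midpoint ℝ G I ∧
      dist F G = dist G H ∧ dist G H = dist H I ∧ dist H I = dist I F := by
  have hFG : dist F G = 3⁻¹ * dist A C := by
    rw [dist_eq_norm, dist_eq_norm, show F - G = (3⁻¹ : ℝ) • (A - C) by subst hF hG; module,
      norm_smul]
    norm_num
  have hGH : dist G H = 3⁻¹ * dist B D := by
    rw [dist_eq_norm, dist_eq_norm, show G - H = (3⁻¹ : ℝ) • (B - D) by subst hG hH; module,
      norm_smul]
    norm_num
  have hHI : dist H I = 3⁻¹ * dist A C := by
    rw [dist_comm A C, dist_eq_norm, dist_eq_norm,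
      show H - I = (3⁻¹ : ℝ) • (C - A) by subst hH hI; module, norm_smul]
    norm_num
  have hIF : dist I F = 3⁻¹ * dist B D := by
    rw [dist_comm B D, dist_eq_norm, dist_eq_norm,
      show I - F = (3⁻¹ : ℝ) • (D - B) by subst hI hF; module, norm_smul]
    norm_num
  refine ⟨?_, ?_, ?_, ?_⟩
  · rw [midpoint_eq_smul_add, midpoint_eq_smul_add]
    subst hF hG hH hI
    module
  · rw [hFG, hGH, hdiag]
  · rw [hGH, hHI, hdiag]
  · rw [hHI, hIF, hdiag]
end

section
/- Let ABCD be an orthodiagonal quadrilateral in the Euclidean plane, i.e. the inner product ⟪C - A, D - B⟫ = 0, and let E be any point of the plane. Let F, G, H, I be the centroids of the radial triangles ABE, BCE, CDE, DAE respectively. Then FGHI is a rectangle: the midpoints of FH and GI coincide, and ⟪G - F, I - F⟫ = 0. -/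
open scoped RealInnerProductSpace

/-- If `ABCD` is an orthodiagonal quadrilateral (`AC ⟂ BD`) and `E` is any
point of the plane, the central quadrilateral `FGHI` of centroids of the radial
triangles is a rectangle. -/
theorem centroid_central_quadrilateral_rectangle_of_orthodiagonal
    (A B C D E F G H I : EuclideanSpace ℝ (Fin 2))
    (hdiag : ⟪C - A, D - B⟫ = 0)
    (hF : F = (3⁻¹ : ℝ) • (A + B + E))
    (hG : G = (3⁻¹ : ℝ) • (B + C + E))
    (hH : H = (3⁻¹ : ℝ) • (C + D + E))
    (hI : I = (3⁻¹ : ℝ) • (D + A + E)) :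
    midpoint ℝ F H = midpoint ℝ G I ∧ ⟪G - F, I - F⟫ = 0 := by
  subst hF hG hH hI
  constructor
  · simp only [midpoint_eq_smul_add]
    module
  · -- The sides of the central quadrilateral are one third of the diagonals of `ABCD`.
    have hGF : (3⁻¹ : ℝ) • (B + C + E) - (3⁻¹ : ℝ) • (A + B + E) = (3⁻¹ : ℝ) • (C - A) := by
      module
    have hIF : (3⁻¹ : ℝ) • (D + A + E) - (3⁻¹ : ℝ) • (A + B + E) = (3⁻¹ : ℝ) • (D - B) := by
      module
    rw [hGF, hIF, real_inner_smul_left, real_inner_smul_right, hdiag, mul_zero, mul_zero]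
end

section
/- Let ABCD be a quadrilateral in the Euclidean plane that is both equidiagonal (dist A C = dist B D) and orthodiagonal (⟪C - A, D - B⟫ = 0), and let E be any point of the plane. Let F, G, H, I be the centroids of the radial triangles ABE, BCE, CDE, DAE respectively. Then FGHI is a square: the midpoints of FH and GI coincide, dist F G = dist G H = dist H I = dist I F, and ⟪G - F, I - F⟫ = 0. -/
/-!
The centroids of two radial triangles sharing a vertex of `ABCD` differ by one third of a diagonal
vector of `ABCD`, since the shared vertex and `E` cancel. Hence the sides of `FGHI` are parallel
to the diagonals alternately and a third as long: equal diagonals give equal sides, perpendicular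
diagonals give a right angle. The midpoints of `FH` and `GI` are both `(A + B + C + D + 2E) / 6`.
-/

open scoped RealInnerProductSpace

/-- If `ABCD` is an equidiagonal orthodiagonal quadrilateral and `E` is any
point of the plane, the central quadrilateral `FGHI` of centroids of the radial
triangles is a square. -/
theorem centroid_central_quadrilateral_square_of_equidiagonal_orthodiagonal
    (A B C D E F G H I : EuclideanSpace ℝ (Fin 2))
    (hequi : dist A C = dist B D)
    (hortho : ⟪C - A, D - B⟫ = 0)
    (hF : F = (3⁻¹ : ℝ) • (A + B + E))
    (hG : G = (3⁻¹ : ℝ) • (B + C + E))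
    (hH : H = (3⁻¹ : ℝ) • (C + D + E))
    (hI : I = (3⁻¹ : ℝ) • (D + A + E)) :
    midpoint ℝ F H = midpoint ℝ G I ∧
      (dist F G = dist G H ∧ dist G H = dist H I ∧ dist H I = dist I F) ∧
      ⟪G - F, I - F⟫ = 0 := by
  have hFG : G - F = (3⁻¹ : ℝ) • (C - A) := by subst hF hG; module
  have hGH : H - G = (3⁻¹ : ℝ) • (D - B) := by subst hG hH; module
  have hHI : H - I = (3⁻¹ : ℝ) • (C - A) := by subst hH hI; module
  have hIF : I - F = (3⁻¹ : ℝ) • (D - B) := by subst hI hF; module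
  have hdiag : ‖C - A‖ = ‖D - B‖ := by
    rw [← dist_eq_norm, ← dist_eq_norm, dist_comm C, dist_comm D, hequi]
  refine ⟨?_, ⟨?_, ?_, ?_⟩, ?_⟩
  · rw [midpoint_eq_smul_add, midpoint_eq_smul_add]
    subst hF hG hH hI
    module
  · rw [dist_comm F G, dist_comm G H, dist_eq_norm, dist_eq_norm, hFG, hGH, norm_smul, norm_smul,
      hdiag]
  · rw [dist_comm G H, dist_eq_norm, dist_eq_norm, hGH, hHI, norm_smul, norm_smul, hdiag]
  · rw [dist_eq_norm, dist_eq_norm, hHI, hIF, norm_smul, norm_smul, hdiag]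
  · rw [hFG, hIF, real_inner_smul_left, real_inner_smul_right, hortho, mul_zero, mul_zero]
end

section
/- Let ABCD be a rectangle in the Euclidean plane: ⟪B - A, D - A⟫ = 0 and C = B + D - A, with A, B, D not collinear. Let E be a point such that each of the triples (A,B,E), (B,C,E), (C,D,E), (D,A,E) is affinely independent, and let F, G, H, I be the circumcenters of the radial triangles ABE, BCE, CDE, DAE respectively. Then the vector H - F is parallel to D - A and the vector I - G is parallel to B - A; in particular the diagonals FH and GI of the central quadrilateral are perpendicular and parallel to the sides of the rectangle. -/
open scoped RealInnerProductSpace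

/-!
`F` and `H` lie on the perpendicular bisectors of `AB` and of `CD`. In a rectangle `CD` is the
translate of `AB` by `D - A ⟂ B - A`, so these two bisectors coincide, and `H - F ⟂ B - A`
(`inner_sub_eq_zero_of_dist_eq`). In the plane, the vectors orthogonal to `B - A ≠ 0` are the
multiples of `D - A ≠ 0` (`exists_eq_smul_of_inner_eq_zero`). The same argument with the two pairs
of sides exchanged handles `I - G`.
-/

/-- Translating a segment `PQ` by a vector `e` orthogonal to it does not change its perpendicular
bisector: if `X` lies on the bisector of `PQ` and `Y` on that of the translate, then
`Y - X` is orthogonal to `Q - P`. -/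
lemma inner_sub_eq_zero_of_dist_eq {V : Type*} [NormedAddCommGroup V] [InnerProductSpace ℝ V]
    {P Q X Y e : V} (he : ⟪Q - P, e⟫ = 0) (hX : dist X P = dist X Q)
    (hY : dist Y (P + e) = dist Y (Q + e)) : ⟪Q - P, Y - X⟫ = 0 := by
  have h1 : ‖X - P‖ ^ 2 = ‖X - Q‖ ^ 2 := by rw [← dist_eq_norm, hX, dist_eq_norm]
  have h2 : ‖Y - (P + e)‖ ^ 2 = ‖Y - (Q + e)‖ ^ 2 := by
    rw [← dist_eq_norm, hY, dist_eq_norm]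
  rw [norm_sub_sq_real, norm_sub_sq_real] at h1 h2
  rw [norm_add_sq_real, norm_add_sq_real, inner_add_right, inner_add_right] at h2
  rw [inner_sub_left] at he
  rw [inner_sub_left, inner_sub_right, inner_sub_right, real_inner_comm Y P,
    real_inner_comm X P, real_inner_comm Y Q, real_inner_comm X Q]
  linarith

/-- In the plane, two vectors orthogonal to the same nonzero vector are parallel. -/
lemma exists_eq_smul_of_inner_eq_zero {u v w : EuclideanSpace ℝ (Fin 2)} (hu : u ≠ 0)
    (hv : v ≠ 0) (huv : ⟪u, v⟫ = 0) (huw : ⟪u, w⟫ = 0) : ∃ t : ℝ, w = t • v := by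
  have : Fact (Module.finrank ℝ (EuclideanSpace ℝ (Fin 2)) = 1 + 1) := ⟨by simp⟩
  have hv' : v ∈ (ℝ ∙ u)ᗮ := Submodule.mem_orthogonal_singleton_iff_inner_right.2 huv
  have hw' : w ∈ (ℝ ∙ u)ᗮ := Submodule.mem_orthogonal_singleton_iff_inner_right.2 huw
  obtain ⟨t, ht⟩ := exists_smul_eq_of_finrank_eq_one
    (Submodule.finrank_orthogonal_span_singleton (𝕜 := ℝ) hu)
    (x := (⟨v, hv'⟩ : (ℝ ∙ u)ᗮ)) (by simpa using hv) ⟨w, hw'⟩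
  exact ⟨t, by simpa using (congrArg Subtype.val ht).symm⟩

/-- For a rectangle `ABCD` and any point `E`, the circumcenters `F`, `G`, `H`,
`I` of the radial triangles `ABE`, `BCE`, `CDE`, `DAE` form an orthodiagonal
quadrilateral whose diagonals `FH` and `GI` are parallel to the sides of the
rectangle. -/
theorem circumcenter_central_quadrilateral_of_rectangle
    (A B C D E F G H I : EuclideanSpace ℝ (Fin 2))
    (hrect : ⟪B - A, D - A⟫ = 0) (hC : C = B + D - A)
    (hABD : AffineIndependent ℝ ![A, B, D])
    (hABE : AffineIndependent ℝ ![A, B, E])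
    (hBCE : AffineIndependent ℝ ![B, C, E])
    (hCDE : AffineIndependent ℝ ![C, D, E])
    (hDAE : AffineIndependent ℝ ![D, A, E])
    (hF : dist F A = dist F B ∧ dist F A = dist F E)
    (hG : dist G B = dist G C ∧ dist G B = dist G E)
    (hH : dist H C = dist H D ∧ dist H C = dist H E)
    (hI : dist I D = dist I A ∧ dist I D = dist I E) :
    (∃ t : ℝ, H - F = t • (D - A)) ∧ (∃ t : ℝ, I - G = t • (B - A)) := by
  have hAB : B - A ≠ 0 := sub_ne_zero.2 (hABD.injective.ne (show (1 : Fin 3) ≠ 0 by decide))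
  have hAD : D - A ≠ 0 := sub_ne_zero.2 (hABD.injective.ne (show (2 : Fin 3) ≠ 0 by decide))
  have hrect' : ⟪D - A, B - A⟫ = 0 := by rw [real_inner_comm, hrect]
  have hDC : A + (D - A) = D ∧ B + (D - A) = C := by
    subst hC; constructor <;> abel
  have hBC : A + (B - A) = B ∧ D + (B - A) = C := by
    subst hC; constructor <;> abel
  constructor
  · refine exists_eq_smul_of_inner_eq_zero hAB hAD hrect
      (inner_sub_eq_zero_of_dist_eq hrect hF.1 ?_)
    rw [hDC.1, hDC.2, hH.1]
  · refine exists_eq_smul_of_inner_eq_zero hAD hAB hrect' ?_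
    -- Here the translated segment `BC` belongs to `G`, so the lemma yields `G - I`.
    have h := inner_sub_eq_zero_of_dist_eq (X := I) (Y := G) hrect' hI.1.symm
      (by rw [hBC.1, hBC.2, hG.1])
    rw [← neg_sub G I, inner_neg_right, h, neg_zero]
end

section
/- Let ABCD be a convex cyclic quadrilateral in the Euclidean plane with circumcenter E and circumradius r > 0: dist E A = dist E B = dist E C = dist E D = r, and the open segments AC and BD intersect. Assume each of the triples (A,B,E), (B,C,E), (C,D,E), (D,A,E) is affinely independent, and let F, G, H, I be the circumcenters of the radial triangles ABE, BCE, CDE, DAE respectively. Then FGHI is a tangential quadrilateral with incenter E and inradius r/2: the distance from E to each of the four lines FG, GH, HI, IF equals r/2. -/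
open scoped RealInnerProductSpace

/-!
Place the origin at the circumcenter `E`. The circumcenters of two neighbouring radial triangles,
which share a vertex `Y` and the side `YE`, are both equidistant from `Y` and `E`, so the line
through them is the perpendicular bisector of `YE`. Its distance to `E` is `dist E Y / 2 = r / 2`
(`infDist_line_eq_half`).

The two circumcenters are distinct: otherwise a single circle through `E` would pass through three
consecutive vertices, and would then coincide with the circle centered at `E`
(`circumcenter_ne`). The consecutive vertices are distinct because the radial triangles are
nondegenerate, and opposite vertices are distinct because the diagonals cross: by strict convexity
of the disk, a point of the circle lies in no nontrivial open chord (`opposite_ne`).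
-/

private lemma dist_sq_coord (P Q : EuclideanSpace ℝ (Fin 2)) :
    dist P Q ^ 2 = (P 0 - Q 0) ^ 2 + (P 1 - Q 1) ^ 2 := by
  rw [EuclideanSpace.dist_eq, Real.sq_sqrt (by positivity)]
  simp [Fin.sum_univ_two, Real.dist_eq, sq_abs]

/-- The equation of the perpendicular bisector of `YE`, for `Y` at distance `r` from `E`. -/
private lemma bisector_eq {P E Y : EuclideanSpace ℝ (Fin 2)} {r : ℝ}
    (hEY : dist E Y = r) (h : dist P Y = dist P E) :
    (P 0 - E 0) * (Y 0 - E 0) + (P 1 - E 1) * (Y 1 - E 1) = r ^ 2 / 2 := by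
  have h1 := dist_sq_coord E Y
  have h2 := dist_sq_coord P Y
  have h3 := dist_sq_coord P E
  rw [hEY] at h1
  rw [h] at h2
  linarith

/-- A plane vector is determined by its inner product and its cross product with a fixed nonzero
vector `(p, q)`. -/
private lemma eq_of_inner_eq_of_cross_eq {p q a b c d : ℝ} (h : p ^ 2 + q ^ 2 ≠ 0)
    (h1 : p * a + q * b = p * c + q * d) (h2 : p * b - q * a = p * d - q * c) :
    a = c ∧ b = d := by
  constructor
  · have : (p ^ 2 + q ^ 2) * (a - c) = 0 := by linear_combination p * h1 - q * h2
    linarith [(mul_eq_zero.mp this).resolve_left h]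
  · have : (p ^ 2 + q ^ 2) * (b - d) = 0 := by linear_combination q * h1 + p * h2
    linarith [(mul_eq_zero.mp this).resolve_left h]

private lemma ext_coord {P Q : EuclideanSpace ℝ (Fin 2)} (h0 : P 0 = Q 0) (h1 : P 1 = Q 1) :
    P = Q := by
  ext i
  fin_cases i
  · exact h0
  · exact h1

/-- No circle through `E` passes through three distinct points of a circle centered at `E`;
so a circumcenter of `XYE` and one of `YZE` cannot coincide. -/
private lemma circumcenter_ne {X Y Z E F G : EuclideanSpace ℝ (Fin 2)} {r : ℝ} (hr : 0 < r)
    (hX : dist E X = r) (hY : dist E Y = r) (hZ : dist E Z = r)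
    (hXY : X ≠ Y) (hYZ : Y ≠ Z) (hXZ : X ≠ Z)
    (hFX : dist F X = dist F E) (hFY : dist F Y = dist F E) (hGZ : dist G Z = dist G E) :
    F ≠ G := by
  rintro rfl
  have bX := bisector_eq hX hFX
  have bY := bisector_eq hY hFY
  have bZ := bisector_eq hZ hGZ
  have cX := dist_sq_coord E X
  have cY := dist_sq_coord E Y
  have cZ := dist_sq_coord E Z
  rw [hX] at cX
  rw [hY] at cY
  rw [hZ] at cZ
  obtain ⟨p, hp⟩ : ∃ p, p = F 0 - E 0 := ⟨_, rfl⟩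
  obtain ⟨q, hq⟩ : ∃ q, q = F 1 - E 1 := ⟨_, rfl⟩
  rw [← hp, ← hq] at bX bY bZ
  have hpq : p ^ 2 + q ^ 2 ≠ 0 := by
    intro h0
    have hp0 : p = 0 := by nlinarith [sq_nonneg p, sq_nonneg q]
    have hq0 : q = 0 := by nlinarith [sq_nonneg p, sq_nonneg q]
    rw [hp0, hq0] at bX
    nlinarith [pow_pos hr 2]
  -- The squared signed position along the common line is determined by `r` and `F`.
  have key : ∀ W : EuclideanSpace ℝ (Fin 2),
      p * (W 0 - E 0) + q * (W 1 - E 1) = r ^ 2 / 2 →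
      r ^ 2 = (E 0 - W 0) ^ 2 + (E 1 - W 1) ^ 2 →
      (p * (W 1 - E 1) - q * (W 0 - E 0)) ^ 2 = (p ^ 2 + q ^ 2) * r ^ 2 - (r ^ 2 / 2) ^ 2 := by
    intro W h1 h2
    rw [← h1, h2]
    ring
  have same : ∀ V W : EuclideanSpace ℝ (Fin 2),
      p * (V 0 - E 0) + q * (V 1 - E 1) = r ^ 2 / 2 →
      p * (W 0 - E 0) + q * (W 1 - E 1) = r ^ 2 / 2 →
      p * (V 1 - E 1) - q * (V 0 - E 0) = p * (W 1 - E 1) - q * (W 0 - E 0) → V = W := by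
    intro V W h1 h2 h3
    obtain ⟨e0, e1⟩ := eq_of_inner_eq_of_cross_eq hpq (h1.trans h2.symm) h3
    exact ext_coord (sub_left_inj.mp e0) (sub_left_inj.mp e1)
  have kX := key X bX cX
  have kY := key Y bY cY
  have kZ := key Z bZ cZ
  -- Of three positions with the same square, two coincide.
  rcases sq_eq_sq_iff_eq_or_eq_neg.mp (kX.trans kY.symm) with h | h
  · exact hXY (same X Y bX bY h)
  · rcases sq_eq_sq_iff_eq_or_eq_neg.mp (kY.trans kZ.symm) with h' | h'
    · exact hYZ (same Y Z bY bZ h')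
    · exact hXZ (same X Z bX bZ (h.trans (by rw [h', neg_neg])))

private lemma infDist_line_eq_half {Y E F G : EuclideanSpace ℝ (Fin 2)} {r : ℝ} (hr : 0 < r)
    (hY : dist E Y = r) (hFG : F ≠ G)
    (hF : dist F Y = dist F E) (hG : dist G Y = dist G E) :
    Metric.infDist E (affineSpan ℝ ({F, G} : Set (EuclideanSpace ℝ (Fin 2))) :
        Set (EuclideanSpace ℝ (Fin 2))) = r / 2 := by
  have bF := bisector_eq hY hF
  have bG := bisector_eq hY hG
  have cY := dist_sq_coord E Y
  rw [hY] at cY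
  -- With `M` the midpoint of `EY`, both `M - F = (a, b)` and `G - F = (u, v)` are orthogonal to
  -- `Y - E ≠ 0`, hence parallel in the plane, so `M` lies on the line `FG`.
  have hmem : midpoint ℝ E Y ∈ affineSpan ℝ ({F, G} : Set (EuclideanSpace ℝ (Fin 2))) := by
    obtain ⟨u, hu⟩ : ∃ u, u = G 0 - F 0 := ⟨_, rfl⟩
    obtain ⟨v, hv⟩ : ∃ v, v = G 1 - F 1 := ⟨_, rfl⟩
    obtain ⟨a, ha⟩ : ∃ a, a = (E 0 + Y 0) / 2 - F 0 := ⟨_, rfl⟩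
    obtain ⟨b, hb⟩ : ∃ b, b = (E 1 + Y 1) / 2 - F 1 := ⟨_, rfl⟩
    have huv : u ^ 2 + v ^ 2 ≠ 0 := by
      intro h0
      have hu0 : u = 0 := by nlinarith [sq_nonneg u, sq_nonneg v]
      have hv0 : v = 0 := by nlinarith [sq_nonneg u, sq_nonneg v]
      exact hFG (ext_coord (by linarith) (by linarith))
    have h1 : u * (Y 0 - E 0) + v * (Y 1 - E 1) = 0 := by
      rw [hu, hv]; linear_combination bG - bF
    have h2 : a * (Y 0 - E 0) + b * (Y 1 - E 1) = 0 := by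
      rw [ha, hb]; linear_combination - bF - cY / 2
    have hdet : a * v - b * u = 0 := by
      have : r ^ 2 * (a * v - b * u) = 0 := by
        rw [cY]
        linear_combination (v * (Y 0 - E 0) - u * (Y 1 - E 1)) * h2 +
          (-(b * (Y 0 - E 0)) + a * (Y 1 - E 1)) * h1
      exact (mul_eq_zero.mp this).resolve_left (by positivity)
    have e : midpoint ℝ E Y = AffineMap.lineMap F G ((a * u + b * v) / (u ^ 2 + v ^ 2)) := by
      apply ext_coord
      · have : a = (a * u + b * v) / (u ^ 2 + v ^ 2) * u := by
          field_simp
          linear_combination v * hdet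
        simp only [midpoint_eq_smul_add, AffineMap.lineMap_apply, vsub_eq_sub, vadd_eq_add,
          PiLp.add_apply, PiLp.smul_apply, PiLp.sub_apply, smul_eq_mul, invOf_eq_inv]
        rw [← hu]
        linarith
      · have : b = (a * u + b * v) / (u ^ 2 + v ^ 2) * v := by
          field_simp
          linear_combination - u * hdet
        simp only [midpoint_eq_smul_add, AffineMap.lineMap_apply, vsub_eq_sub, vadd_eq_add,
          PiLp.add_apply, PiLp.smul_apply, PiLp.sub_apply, smul_eq_mul, invOf_eq_inv]
        rw [← hv]
        linarith
    rw [e]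
    exact AffineMap.lineMap_mem_affineSpan_pair _ _ _
  apply le_antisymm
  · refine (Metric.infDist_le_dist_of_mem hmem).trans (le_of_eq ?_)
    rw [dist_left_midpoint, hY, Real.norm_ofNat]
    ring
  · refine (Metric.le_infDist ⟨_, hmem⟩).mpr fun P hP => ?_
    -- A point of the bisector is equally far from `E` and `Y`: use the triangle inequality.
    have hle : affineSpan ℝ ({F, G} : Set (EuclideanSpace ℝ (Fin 2))) ≤
        AffineSubspace.perpBisector Y E := by
      rw [affineSpan_le]
      rintro Q (rfl | rfl)
      · exact AffineSubspace.mem_perpBisector_iff_dist_eq.mpr hF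
      · exact AffineSubspace.mem_perpBisector_iff_dist_eq.mpr hG
    have hP' := AffineSubspace.mem_perpBisector_iff_dist_eq.mp (hle hP)
    have := dist_triangle E P Y
    rw [hP', hY, dist_comm P E] at this
    linarith

/-- If `A = C`, the only point of the degenerate diagonal `AC` lies on the circle, hence by strict
convexity of the disk it can only be on the chord `BD` when `B = D = A`. -/
private lemma opposite_ne {A B C D E : EuclideanSpace ℝ (Fin 2)} {r : ℝ}
    (hA : dist E A = r) (hB : dist E B = r) (hD : dist E D = r)
    (hconv : ∃ P : EuclideanSpace ℝ (Fin 2),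
      P ∈ openSegment ℝ A C ∧ P ∈ openSegment ℝ B D) (hAB : A ≠ B) : A ≠ C := by
  rintro rfl
  obtain ⟨P, hP, hP'⟩ := hconv
  rw [openSegment_same, Set.mem_singleton_iff] at hP
  subst hP
  by_cases hBD : B = D
  · subst hBD
    rw [openSegment_same, Set.mem_singleton_iff] at hP'
    exact hAB hP'
  · have := openSegment_subset_ball_of_ne (z := E) (r := r)
      (Metric.mem_closedBall'.mpr hB.le) (Metric.mem_closedBall'.mpr hD.le) hBD hP'
    exact absurd hA (Metric.mem_ball'.mp this).ne

private lemma ne_of_affineIndependent {X Y Z : EuclideanSpace ℝ (Fin 2)}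
    (h : AffineIndependent ℝ ![X, Y, Z]) : X ≠ Y :=
  h.injective.ne (show (0 : Fin 3) ≠ 1 by decide)

/-- If `E` is the circumcenter (Steiner point) of a convex cyclic quadrilateral
`ABCD` with circumradius `r`, then the circumcenters `F`, `G`, `H`, `I` of the
radial triangles `ABE`, `BCE`, `CDE`, `DAE` form a tangential quadrilateral with
incenter `E` and inradius `r / 2`. -/
theorem circumcenter_central_quadrilateral_of_cyclic_tangential
    (A B C D E F G H I : EuclideanSpace ℝ (Fin 2)) (r : ℝ) (hr : 0 < r)
    (hEA : dist E A = r) (hEB : dist E B = r) (hEC : dist E C = r)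
    (hED : dist E D = r)
    (hconv : ∃ P : EuclideanSpace ℝ (Fin 2),
      P ∈ openSegment ℝ A C ∧ P ∈ openSegment ℝ B D)
    (hABE : AffineIndependent ℝ ![A, B, E])
    (hBCE : AffineIndependent ℝ ![B, C, E])
    (hCDE : AffineIndependent ℝ ![C, D, E])
    (hDAE : AffineIndependent ℝ ![D, A, E])
    (hF : dist F A = dist F B ∧ dist F A = dist F E)
    (hG : dist G B = dist G C ∧ dist G B = dist G E)
    (hH : dist H C = dist H D ∧ dist H C = dist H E)
    (hI : dist I D = dist I A ∧ dist I D = dist I E) :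
    Metric.infDist E (affineSpan ℝ ({F, G} : Set (EuclideanSpace ℝ (Fin 2))) :
        Set (EuclideanSpace ℝ (Fin 2))) = r / 2 ∧
    Metric.infDist E (affineSpan ℝ ({G, H} : Set (EuclideanSpace ℝ (Fin 2))) :
        Set (EuclideanSpace ℝ (Fin 2))) = r / 2 ∧
    Metric.infDist E (affineSpan ℝ ({H, I} : Set (EuclideanSpace ℝ (Fin 2))) :
        Set (EuclideanSpace ℝ (Fin 2))) = r / 2 ∧
    Metric.infDist E (affineSpan ℝ ({I, F} : Set (EuclideanSpace ℝ (Fin 2))) :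
        Set (EuclideanSpace ℝ (Fin 2))) = r / 2 := by
  have hAB := ne_of_affineIndependent hABE
  have hBC := ne_of_affineIndependent hBCE
  have hCD := ne_of_affineIndependent hCDE
  have hDA := ne_of_affineIndependent hDAE
  have hAC : A ≠ C := opposite_ne hEA hEB hED hconv hAB
  have hBD : B ≠ D := by
    obtain ⟨P, h1, h2⟩ := hconv
    exact opposite_ne hEB hEA hEC ⟨P, h2, h1⟩ hAB.symm
  have hFB := hF.1.symm.trans hF.2
  have hGC := hG.1.symm.trans hG.2
  have hHD := hH.1.symm.trans hH.2
  have hIA := hI.1.symm.trans hI.2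
  exact ⟨infDist_line_eq_half hr hEB
      (circumcenter_ne hr hEA hEB hEC hAB hBC hAC hF.2 hFB hGC) hFB hG.2,
    infDist_line_eq_half hr hEC
      (circumcenter_ne hr hEB hEC hED hBC hCD hBD hG.2 hGC hHD) hGC hH.2,
    infDist_line_eq_half hr hED
      (circumcenter_ne hr hEC hED hEA hCD hDA hAC.symm hH.2 hHD hIA) hHD hI.2,
    infDist_line_eq_half hr hEA
      (circumcenter_ne hr hED hEA hEB hDA hAB hBD.symm hI.2 hIA hFB) hIA hF.2⟩
end

section
/- Let ABCD be an orthodiagonal quadrilateral in the Euclidean plane (⟪C - A, D - B⟫ = 0) and let E be the common point of the perpendicular bisectors of the diagonals: dist E A = dist E C and dist E B = dist E D. Assume each of the triples (A,B,E), (B,C,E), (C,D,E), (D,A,E) is affinely independent, and let F, G, H, I be the circumcenters of the radial triangles ABE, BCE, CDE, DAE respectively. Then F, G, H, I are concyclic. -/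
/-!
Take `E` as origin and the directions of the diagonals as axes. When neither diagonal is
degenerate, the perpendicular bisectors of `EA` and `EC` are mirror images in the second axis,
those of `EB` and `ED` are mirror images in the first, and `F`, `G`, `H`, `I` lie at the
intersections of one line from each pair. In units where `|C - A| = 2`,
`A = (-1, s)` and `B = (w, t)`, with `α = |A|² / 2` and `β = |B|² / 2`, these line pairs are the conics
`(s y - α)² - x² = 0` and `(w x - β)² - t² y² = 0`. Both have no `xy` term, so a combination of
them is a circle; its leading coefficient is nonzero because `A`, `B`, `E` and `D`, `A`, `E` are
affinely independent (`conic_pencil`).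

If a diagonal is degenerate, adjacent radial triangles coincide, so by uniqueness of the circumcenter
(`circumcenter_unique`) the four circumcenters are at most two points.
-/

open scoped RealInnerProductSpace

lemma dist_eq_dist_iff_coords (P Q R S : EuclideanSpace ℝ (Fin 2)) :
    dist P Q = dist R S ↔
      (P 0 - Q 0) ^ 2 + (P 1 - Q 1) ^ 2 = (R 0 - S 0) ^ 2 + (R 1 - S 1) ^ 2 := by
  rw [EuclideanSpace.dist_eq, EuclideanSpace.dist_eq, Real.sqrt_inj (by positivity) (by positivity)]
  simp [Fin.sum_univ_two, Real.dist_eq, sq_abs]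

lemma det_ne_zero_of_affineIndependent {P Q R : EuclideanSpace ℝ (Fin 2)}
    (h : AffineIndependent ℝ ![P, Q, R]) :
    (P 0 - R 0) * (Q 1 - R 1) - (P 1 - R 1) * (Q 0 - R 0) ≠ 0 := by
  intro hdet
  have hPR : P ≠ R := fun e => by simpa using h.injective (a₁ := 0) (a₂ := 2) (by simpa using e)
  rw [affineIndependent_iff_not_collinear_set] at h
  apply h
  have hn : (P 0 - R 0) ^ 2 + (P 1 - R 1) ^ 2 ≠ 0 := by
    intro hn
    apply hPR
    ext i
    fin_cases i
    · show P 0 = R 0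
      nlinarith [sq_nonneg (P 0 - R 0), sq_nonneg (P 1 - R 1)]
    · show P 1 = R 1
      nlinarith [sq_nonneg (P 0 - R 0), sq_nonneg (P 1 - R 1)]
  rw [collinear_iff_of_mem (p₀ := R) (by simp)]
  refine ⟨P - R, ?_⟩
  rintro p (rfl | rfl | rfl)
  · exact ⟨1, by simp⟩
  · -- The coefficient of `Q - R` along `P - R` is that of the orthogonal projection.
    refine ⟨((P 0 - R 0) * (p 0 - R 0) + (P 1 - R 1) * (p 1 - R 1)) /
      ((P 0 - R 0) ^ 2 + (P 1 - R 1) ^ 2), ?_⟩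
    ext i
    fin_cases i
    · simp
      field_simp
      linear_combination (-(P 1 - R 1)) * hdet
    · simp
      field_simp
      linear_combination (P 0 - R 0) * hdet
  · exact ⟨0, by simp⟩

lemma circumcenter_unique {P Q R X Y : EuclideanSpace ℝ (Fin 2)}
    (h : AffineIndependent ℝ ![P, Q, R])
    (hX : dist X P = dist X R) (hX' : dist X Q = dist X R)
    (hY : dist Y P = dist Y R) (hY' : dist Y Q = dist Y R) : X = Y := by
  have hd := det_ne_zero_of_affineIndependent h
  rw [dist_eq_dist_iff_coords] at hX hX' hY hY'
  ext i
  fin_cases i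
  · show X 0 = Y 0
    apply mul_left_cancel₀ hd
    linear_combination (-(Q 1 - R 1) / 2) * (hX - hY) + ((P 1 - R 1) / 2) * (hX' - hY')
  · show X 1 = Y 1
    apply mul_left_cancel₀ hd
    linear_combination ((Q 0 - R 0) / 2) * (hX - hY) - ((P 0 - R 0) / 2) * (hX' - hY')

/-- Coordinates of `X` in the frame at `E` with orthogonal axis vectors `(u, v)` and
`(-v, u)`. The application takes `(u, v)` to be half the vector from `A` to `C`. -/
lemma exists_frame_coords {u v : ℝ} (hn : u ^ 2 + v ^ 2 ≠ 0) (E X : EuclideanSpace ℝ (Fin 2)) :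
    ∃ x y : ℝ, X 0 = E 0 + x * u - y * v ∧ X 1 = E 1 + x * v + y * u := by
  refine ⟨((X 0 - E 0) * u + (X 1 - E 1) * v) / (u ^ 2 + v ^ 2),
    ((X 1 - E 1) * u - (X 0 - E 0) * v) / (u ^ 2 + v ^ 2), ?_, ?_⟩ <;>
  · field_simp
    ring

/-- A circle in the pencil of two line pairs: with `α = (1 + s²) / 2` and `β = (w² + t²) / 2`, the
combination of the two conics with weights `β` and `α` has equal coefficients at `x²` and `y²`,
equal to `(s² w² - t²) / 2`. The constants `a`, `b` are the coordinates of its centre, and its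
constant term is determined by the parameters alone. -/
lemma conic_pencil {s t w : ℝ} (h₁ : t - s * w ≠ 0) (h₂ : t + s * w ≠ 0) :
    ∃ a b c : ℝ, ∀ x y : ℝ,
      (s * y - (1 + s ^ 2) / 2) ^ 2 - x ^ 2 = 0 →
      (w * x - (w ^ 2 + t ^ 2) / 2) ^ 2 - t ^ 2 * y ^ 2 = 0 →
      (x - a) ^ 2 + (y - b) ^ 2 = c := by
  have hk : s ^ 2 * w ^ 2 - t ^ 2 ≠ 0 := by
    have := mul_ne_zero h₁ h₂
    contrapose! this
    linear_combination -this
  set k := s ^ 2 * w ^ 2 - t ^ 2 with hkdef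
  obtain ⟨m, hm⟩ : ∃ m, m * k = (1 + s ^ 2) * (w ^ 2 + t ^ 2) / 2 :=
    ⟨(1 + s ^ 2) * (w ^ 2 + t ^ 2) / 2 / k, by field_simp⟩
  refine ⟨m * w, m * s, (m * w) ^ 2 + (m * s) ^ 2
    - m * ((1 + s ^ 2) / 2 + (w ^ 2 + t ^ 2) / 2), fun x y hx hy => ?_⟩
  apply mul_left_cancel₀ hk
  rw [hkdef] at hm ⊢
  linear_combination (w ^ 2 + t ^ 2) * hx + (1 + s ^ 2) * hy
    + ((1 + s ^ 2) / 2 + (w ^ 2 + t ^ 2) / 2 - 2 * w * x - 2 * s * y) * hm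

/-- In frame coordinates, a point `X` equidistant from `E` and from `P` satisfies the linear
equation of the perpendicular bisector of `EP`. -/
lemma bisector_frame {u v x y p q : ℝ} (hn : u ^ 2 + v ^ 2 ≠ 0)
    {E X P : EuclideanSpace ℝ (Fin 2)}
    (hX0 : X 0 = E 0 + x * u - y * v) (hX1 : X 1 = E 1 + x * v + y * u)
    (hP0 : P 0 = E 0 + p * u - q * v) (hP1 : P 1 = E 1 + p * v + q * u)
    (h : dist X P = dist X E) : p * x + q * y = (p ^ 2 + q ^ 2) / 2 := by
  rw [dist_eq_dist_iff_coords, hX0, hX1, hP0, hP1] at h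
  apply mul_left_cancel₀ hn
  linear_combination -h / 2

/-- The frame coordinates are `A = (-1, s)`, `C = (1, s)`, `B = (w, t)`, `D = (w, -t)`. Each
circumcenter lies on a bisector of `EA` or `EC` and on one of `EB` or `ED`, hence on both conics of
`conic_pencil`. -/
lemma cospherical_of_frame {u v s t w : ℝ} (hn : u ^ 2 + v ^ 2 ≠ 0)
    {A B C D E F G H I : EuclideanSpace ℝ (Fin 2)}
    (hA0 : A 0 = E 0 + (-1) * u - s * v) (hA1 : A 1 = E 1 + (-1) * v + s * u)
    (hC0 : C 0 = E 0 + 1 * u - s * v) (hC1 : C 1 = E 1 + 1 * v + s * u)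
    (hB0 : B 0 = E 0 + w * u - t * v) (hB1 : B 1 = E 1 + w * v + t * u)
    (hD0 : D 0 = E 0 + w * u - (-t) * v) (hD1 : D 1 = E 1 + w * v + (-t) * u)
    (hABE : AffineIndependent ℝ ![A, B, E]) (hDAE : AffineIndependent ℝ ![D, A, E])
    (hF : dist F A = dist F E ∧ dist F B = dist F E)
    (hG : dist G B = dist G E ∧ dist G C = dist G E)
    (hH : dist H C = dist H E ∧ dist H D = dist H E)
    (hI : dist I D = dist I E ∧ dist I A = dist I E) :
    EuclideanGeometry.Cospherical ({F, G, H, I} : Set (EuclideanSpace ℝ (Fin 2))) := by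
  have d₁ := det_ne_zero_of_affineIndependent hABE
  have d₂ := det_ne_zero_of_affineIndependent hDAE
  rw [hA0, hA1, hB0, hB1] at d₁
  rw [hA0, hA1, hD0, hD1] at d₂
  have h₁ : t - s * w ≠ 0 := by
    contrapose! d₂
    linear_combination -(u ^ 2 + v ^ 2) * d₂
  have h₂ : t + s * w ≠ 0 := by
    contrapose! d₁
    linear_combination -(u ^ 2 + v ^ 2) * d₁
  obtain ⟨a, b, c, habc⟩ := conic_pencil h₁ h₂
  set O : EuclideanSpace ℝ (Fin 2) := !₂[E 0 + a * u - b * v, E 1 + a * v + b * u] with hO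
  have hO0 : O 0 = E 0 + a * u - b * v := by simp [hO]
  have hO1 : O 1 = E 1 + a * v + b * u := by simp [hO]
  have key : ∀ X : EuclideanSpace ℝ (Fin 2),
      (dist X A = dist X E ∨ dist X C = dist X E) → (dist X B = dist X E ∨ dist X D = dist X E) →
      dist X O = √((u ^ 2 + v ^ 2) * c) := by
    intro X hAC hBD
    obtain ⟨x, y, hX0, hX1⟩ := exists_frame_coords hn E X
    have e₁ : (s * y - (1 + s ^ 2) / 2) ^ 2 - x ^ 2 = 0 := by
      rcases hAC with h | h
      · have := bisector_frame hn hX0 hX1 hA0 hA1 h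
        linear_combination (s * y - (1 + s ^ 2) / 2 + x) * this
      · have := bisector_frame hn hX0 hX1 hC0 hC1 h
        linear_combination (s * y - (1 + s ^ 2) / 2 - x) * this
    have e₂ : (w * x - (w ^ 2 + t ^ 2) / 2) ^ 2 - t ^ 2 * y ^ 2 = 0 := by
      rcases hBD with h | h
      · have := bisector_frame hn hX0 hX1 hB0 hB1 h
        linear_combination (w * x - (w ^ 2 + t ^ 2) / 2 - t * y) * this
      · have := bisector_frame hn hX0 hX1 hD0 hD1 h
        linear_combination (w * x - (w ^ 2 + t ^ 2) / 2 + t * y) * this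
    have e := habc x y e₁ e₂
    rw [EuclideanSpace.dist_eq, Fin.sum_univ_two, Real.dist_eq, Real.dist_eq, sq_abs, sq_abs,
      hX0, hX1, hO0, hO1]
    congr 1
    linear_combination (u ^ 2 + v ^ 2) * e
  refine ⟨O, √((u ^ 2 + v ^ 2) * c), ?_⟩
  rintro X (rfl | rfl | rfl | rfl)
  · exact key _ (.inl hF.1) (.inl hF.2)
  · exact key _ (.inr hG.2) (.inl hG.1)
  · exact key _ (.inr hH.1) (.inr hH.2)
  · exact key _ (.inl hI.2) (.inr hI.1)

/-- If `E` is the Steiner point of an orthodiagonal quadrilateral `ABCD` (the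
common point of the perpendicular bisectors of the diagonals), then the
circumcenters `F`, `G`, `H`, `I` of the radial triangles `ABE`, `BCE`, `CDE`,
`DAE` are concyclic. -/
theorem circumcenter_central_quadrilateral_of_orthodiagonal_concyclic
    (A B C D E F G H I : EuclideanSpace ℝ (Fin 2))
    (hortho : ⟪C - A, D - B⟫ = 0)
    (hEAC : dist E A = dist E C) (hEBD : dist E B = dist E D)
    (hABE : AffineIndependent ℝ ![A, B, E])
    (hBCE : AffineIndependent ℝ ![B, C, E])
    (hCDE : AffineIndependent ℝ ![C, D, E])
    (hDAE : AffineIndependent ℝ ![D, A, E])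
    (hF : dist F A = dist F B ∧ dist F A = dist F E)
    (hG : dist G B = dist G C ∧ dist G B = dist G E)
    (hH : dist H C = dist H D ∧ dist H C = dist H E)
    (hI : dist I D = dist I A ∧ dist I D = dist I E) :
    EuclideanGeometry.Concyclic ({F, G, H, I} : Set (EuclideanSpace ℝ (Fin 2))) := by
  have hF' : dist F A = dist F E ∧ dist F B = dist F E := ⟨hF.2, hF.1.symm.trans hF.2⟩
  have hG' : dist G B = dist G E ∧ dist G C = dist G E := ⟨hG.2, hG.1.symm.trans hG.2⟩
  have hH' : dist H C = dist H E ∧ dist H D = dist H E := ⟨hH.2, hH.1.symm.trans hH.2⟩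
  have hI' : dist I D = dist I E ∧ dist I A = dist I E := ⟨hI.2, hI.1.symm.trans hI.2⟩
  have : Fact (Module.finrank ℝ (EuclideanSpace ℝ (Fin 2)) = 2) := ⟨by simp⟩
  refine ⟨?_, coplanar_of_fact_finrank_eq_two _⟩
  by_cases hAC : A = C
  · subst hAC
    obtain rfl := circumcenter_unique hABE hF'.1 hF'.2 hG'.2 hG'.1
    obtain rfl := circumcenter_unique hDAE hI'.1 hI'.2 hH'.2 hH'.1
    refine (EuclideanGeometry.cospherical_pair F I).subset ?_
    simp
  by_cases hBD : B = D
  · subst hBD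
    obtain rfl := circumcenter_unique hABE hF'.1 hF'.2 hI'.2 hI'.1
    obtain rfl := circumcenter_unique hBCE hG'.1 hG'.2 hH'.2 hH'.1
    refine (EuclideanGeometry.cospherical_pair F G).subset ?_
    simp [Set.insert_subset_iff]
  obtain ⟨u, hu⟩ : ∃ u, C 0 = A 0 + 2 * u := ⟨(C 0 - A 0) / 2, by ring⟩
  obtain ⟨v, hv⟩ : ∃ v, C 1 = A 1 + 2 * v := ⟨(C 1 - A 1) / 2, by ring⟩
  have hn : u ^ 2 + v ^ 2 ≠ 0 := by
    intro h
    have hu0 : u = 0 := by nlinarith [sq_nonneg u, sq_nonneg v]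
    have hv0 : v = 0 := by nlinarith [sq_nonneg u, sq_nonneg v]
    apply hAC
    ext i
    fin_cases i
    · simp [hu, hu0]
    · simp [hv, hv0]
  obtain ⟨p, s, hA0, hA1⟩ := exists_frame_coords hn E A
  obtain ⟨w, t, hB0, hB1⟩ := exists_frame_coords hn E B
  obtain ⟨w', t', hD0, hD1⟩ := exists_frame_coords hn E D
  rw [dist_eq_dist_iff_coords] at hEAC hEBD
  rw [hu, hv, hA0, hA1] at hEAC
  have hp : p = -1 := by
    apply mul_left_cancel₀ hn
    linear_combination -hEAC / 4
  have hw : w' = w := by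
    simp only [PiLp.inner_apply, Fin.sum_univ_two, PiLp.sub_apply, RCLike.inner_apply, conj_trivial,
      hu, hv, hB0, hB1, hD0, hD1] at hortho
    apply mul_left_cancel₀ hn
    linear_combination hortho / 2
  subst hp hw
  have ht : t' = -t := by
    rw [hB0, hB1, hD0, hD1] at hEBD
    have : (t' - t) * (t' + t) = 0 := by
      apply mul_left_cancel₀ hn
      linear_combination -hEBD
    rcases mul_eq_zero.1 this with h | h
    · obtain rfl : t' = t := by linarith
      -- Equal coordinates give `B = D`, which is excluded.
      refine absurd ?_ hBD
      ext i
      fin_cases i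
      · exact hB0.trans hD0.symm
      · exact hB1.trans hD1.symm
    · linarith
  subst ht
  exact cospherical_of_frame hn hA0 hA1 (by rw [hu, hA0]; ring) (by rw [hv, hA1]; ring)
    hB0 hB1 hD0 hD1 hABE hDAE hF' hG' hH' hI'
end

section
/- Let ABCD be a bicentric quadrilateral in the Euclidean plane: dist E A = dist E B = dist E C = dist E D = r > 0 for its circumcenter E, the open segments AC and BD intersect (convexity), and dist A B + dist C D = dist B C + dist D A (the Pitot condition for a tangential quadrilateral). Assume each of the triples (A,B,E), (B,C,E), (C,D,E), (D,A,E) is affinely independent, and let F, G, H, I be the incenters of the radial triangles ABE, BCE, CDE, DAE respectively. Then F, G, H, I are concyclic. -/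
/-! Put the circumcenter `E` at the origin. The incenter of `ABE` is then `r (A + B) / (2r + |AB|)`,
and since `|A + B|² + |AB|² = 4r²`, the lifted point `(A + B, |AB|)` lies on the sphere of radius `2r`
in `ℝ² × ℝ`; the incenter is, up to scale, its stereographic projection from the pole `(0, -2r)`.
The Pitot condition says exactly that the lifted points `P₁, P₂, P₃, P₄` of the sides `AB`, `BC`,
`CD`, `DA` satisfy `P₁ + P₃ = P₂ + P₄ =: N`. As all of them have the same norm, each has inner product `|N|² / 2`
with `N` (`lift_mem_plane`), so they lie on one plane section of the sphere. This plane does not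
pass through the pole, because the last coordinate of `N` is a positive sum of side lengths, so
the projection sends the section to a genuine circle (`dist_sq_of_lift_mem_plane`). -/

open scoped RealInnerProductSpace

/-- The incenter of the triangle with vertices `P`, `Q`, `R`: the weighted
average of the vertices with weights the lengths of the opposite sides. -/
noncomputable def triangleIncenter (P Q R : EuclideanSpace ℝ (Fin 2)) :
    EuclideanSpace ℝ (Fin 2) :=
  (dist Q R / (dist Q R + dist P R + dist P Q)) • P +
    (dist P R / (dist Q R + dist P R + dist P Q)) • Q +
    (dist P Q / (dist Q R + dist P R + dist P Q)) • R

/-- Incenter of an isosceles triangle with apex `E` and legs of length `r`. -/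
lemma triangleIncenter_isosceles (A B E : EuclideanSpace ℝ (Fin 2)) (r : ℝ) (hr : 0 < r)
    (hA : dist E A = r) (hB : dist E B = r) :
    triangleIncenter A B E =
      E + (r / (2 * r + dist A B)) • ((A - E) + (B - E)) := by
  have h0 : 2 * r + dist A B ≠ 0 := by positivity
  have h1 : dist A B / (2 * r + dist A B) = 1 - 2 * (r / (2 * r + dist A B)) := by
    field_simp
    ring
  unfold triangleIncenter
  rw [dist_comm B E, dist_comm A E, hA, hB, ← two_mul, h1]
  module

/-- The lifted point `(A + B, |AB|)` (origin at `E`) lies on the sphere of radius `2r`: this is the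
parallelogram law. -/
lemma lift_mem_sphere (A B E : EuclideanSpace ℝ (Fin 2)) (r : ℝ)
    (hA : dist E A = r) (hB : dist E B = r) :
    ‖(A - E) + (B - E)‖ ^ 2 + dist A B ^ 2 = 4 * r ^ 2 := by
  have h := parallelogram_law_with_norm ℝ (A - E) (B - E)
  rw [sub_sub_sub_cancel_right, ← dist_eq_norm A B, ← dist_eq_norm A E, ← dist_eq_norm B E,
    dist_comm A E, dist_comm B E, hA, hB] at h
  linarith

/-- If `(m₁, s₁)` and `(m₂, s₂)` have the same norm and sum `N = (n, σ)`, then `(m₁, s₁)` lies on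
the plane `⟪N, ·⟫ = |N|² / 2`. -/
lemma lift_mem_plane (m₁ m₂ n : EuclideanSpace ℝ (Fin 2)) (s₁ s₂ σ q : ℝ)
    (h₁ : ‖m₁‖ ^ 2 + s₁ ^ 2 = q) (h₂ : ‖m₂‖ ^ 2 + s₂ ^ 2 = q)
    (hn : n = m₁ + m₂) (hσ : σ = s₁ + s₂) :
    ⟪n, m₁⟫ + σ * s₁ = (‖n‖ ^ 2 + σ ^ 2) / 2 := by
  subst hn hσ
  rw [norm_add_sq_real, inner_add_left, real_inner_self_eq_norm_sq, real_inner_comm]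
  linarith

/-- The image under projection of a plane section of the sphere of radius `2r` lies on a circle,
with center and squared radius depending only on the plane. The condition `0 < k + 2rσ` says that
the plane misses the pole `(0, -2r)`, at which the form `⟪n, m⟫ + σ s` takes the value
`-2rσ < k`. -/
lemma dist_sq_of_lift_mem_plane (E m n : EuclideanSpace ℝ (Fin 2)) (r s σ k : ℝ)
    (hr : 0 < r) (hs : 0 ≤ s) (hk : 0 < k + 2 * r * σ)
    (hm : ‖m‖ ^ 2 + s ^ 2 = 4 * r ^ 2) (hp : ⟪n, m⟫ + σ * s = k) :
    dist (E + (r / (2 * r + s)) • m) (E + (2 * r ^ 2 / (k + 2 * r * σ)) • n) ^ 2 =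
      (2 * r ^ 2 / (k + 2 * r * σ)) ^ 2 * ‖n‖ ^ 2
        + r ^ 2 * (2 * r * σ - k) / (k + 2 * r * σ) := by
  have h0 : 2 * r + s ≠ 0 := by positivity
  have hk0 := hk.ne'
  have hm' : ‖m‖ ^ 2 = (2 * r - s) * (2 * r + s) := by linarith
  have hp' : ⟪m, n⟫ = k - σ * s := by rw [real_inner_comm]; linarith
  rw [dist_add_left, dist_eq_norm, norm_sub_sq_real, inner_smul_left, inner_smul_right,
    norm_smul, norm_smul, mul_pow, mul_pow, Real.norm_eq_abs, Real.norm_eq_abs, sq_abs, sq_abs,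
    hm', hp']
  simp only [conj_trivial]
  obtain ⟨K, hK⟩ : ∃ K, K = k + 2 * r * σ := ⟨_, rfl⟩
  obtain rfl : k = K - 2 * r * σ := by linarith
  rw [← hK] at hk0 ⊢
  field_simp
  ring

/-- If `E` is the circumcenter (Steiner point) of a bicentric quadrilateral
`ABCD`, then the incenters `F`, `G`, `H`, `I` of the radial triangles `ABE`,
`BCE`, `CDE`, `DAE` are concyclic. -/
theorem incenter_central_quadrilateral_of_bicentric_concyclic
    (A B C D E F G H I : EuclideanSpace ℝ (Fin 2)) (r : ℝ) (hr : 0 < r)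
    (hEA : dist E A = r) (hEB : dist E B = r) (hEC : dist E C = r)
    (hED : dist E D = r)
    (hconv : ∃ P : EuclideanSpace ℝ (Fin 2),
      P ∈ openSegment ℝ A C ∧ P ∈ openSegment ℝ B D)
    (hpitot : dist A B + dist C D = dist B C + dist D A)
    (hABE : AffineIndependent ℝ ![A, B, E])
    (hBCE : AffineIndependent ℝ ![B, C, E])
    (hCDE : AffineIndependent ℝ ![C, D, E])
    (hDAE : AffineIndependent ℝ ![D, A, E])
    (hF : F = triangleIncenter A B E)
    (hG : G = triangleIncenter B C E)
    (hH : H = triangleIncenter C D E)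
    (hI : I = triangleIncenter D A E) :
    EuclideanGeometry.Concyclic ({F, G, H, I} : Set (EuclideanSpace ℝ (Fin 2))) := by
  have hAB := lift_mem_sphere A B E r hEA hEB
  have hBC := lift_mem_sphere B C E r hEB hEC
  have hCD := lift_mem_sphere C D E r hEC hED
  have hDA := lift_mem_sphere D A E r hED hEA
  obtain ⟨n, hn⟩ : ∃ n, n = ((A - E) + (B - E)) + ((C - E) + (D - E)) := ⟨_, rfl⟩
  obtain ⟨σ, hσ⟩ : ∃ σ, σ = dist A B + dist C D := ⟨_, rfl⟩
  have pAB := lift_mem_plane _ _ n _ _ σ _ hAB hCD hn hσ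
  have pCD := lift_mem_plane _ _ n _ _ σ _ hCD hAB (by rw [hn]; abel) (by rw [hσ]; ring)
  have pBC := lift_mem_plane _ _ n _ _ σ _ hBC hDA (by rw [hn]; abel) (by rw [hσ, hpitot])
  have pDA := lift_mem_plane _ _ n _ _ σ _ hDA hBC (by rw [hn]; abel)
    (by rw [hσ, hpitot]; ring)
  have hne : A ≠ B := by
    intro h
    have := hABE.injective.ne (show (0 : Fin 3) ≠ 1 by decide)
    exact this (by simpa using h)
  have hσ0 : 0 < σ := by
    have := dist_pos.2 hne
    rw [hσ]
    positivity
  obtain ⟨k, hk⟩ : ∃ k, k = (‖n‖ ^ 2 + σ ^ 2) / 2 := ⟨_, rfl⟩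
  rw [← hk] at pAB pBC pCD pDA
  have hpos : 0 < k + 2 * r * σ := by rw [hk]; positivity
  refine ⟨⟨E + (2 * r ^ 2 / (k + 2 * r * σ)) • n,
    √((2 * r ^ 2 / (k + 2 * r * σ)) ^ 2 * ‖n‖ ^ 2
        + r ^ 2 * (2 * r * σ - k) / (k + 2 * r * σ)), ?_⟩, ?_⟩
  · intro p hp
    rw [← Real.sqrt_sq (dist_nonneg (x := p))]
    congr 1
    rw [triangleIncenter_isosceles A B E r hr hEA hEB] at hF
    rw [triangleIncenter_isosceles B C E r hr hEB hEC] at hG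
    rw [triangleIncenter_isosceles C D E r hr hEC hED] at hH
    rw [triangleIncenter_isosceles D A E r hr hED hEA] at hI
    rcases hp with rfl | rfl | rfl | rfl
    · rw [hF]
      exact dist_sq_of_lift_mem_plane E _ n r _ σ k hr dist_nonneg hpos hAB pAB
    · rw [hG]
      exact dist_sq_of_lift_mem_plane E _ n r _ σ k hr dist_nonneg hpos hBC pBC
    · rw [hH]
      exact dist_sq_of_lift_mem_plane E _ n r _ σ k hr dist_nonneg hpos hCD pCD
    · rw [hI]
      exact dist_sq_of_lift_mem_plane E _ n r _ σ k hr dist_nonneg hpos hDA pDA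
  · exact coplanar_of_finrank_eq_two _ finrank_euclideanSpace_fin
end

section
/- Let ABCD be a bicentric quadrilateral in the Euclidean plane: dist E A = dist E B = dist E C = dist E D = r > 0 for its circumcenter E, the open segments AC and BD intersect (convexity), and dist A B + dist C D = dist B C + dist D A (the Pitot condition). Assume each of the triples (A,B,E), (B,C,E), (C,D,E), (D,A,E) is affinely independent. Let F, G, H, I be the midpoints of the segments joining E to the incenters of the radial triangles ABE, BCE, CDE, DAE respectively (these midpoints are the X₂₁₄-points of the radial triangles, since for each radial triangle E is its X₁₀₀-point). Then F, G, H, I are concyclic. -/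
/-!
Put the circumcenter `E` at the origin and scale the circumradius to `1`. If a side `XY` of the
quadrilateral subtends the central angle `2α`, its incenter midpoint is
`(x + y) / (2 (2 + 2 sin α))`, and `|x + y|² = 4 - 4 sin² α`. Substituting this into the equation
`|Z|² - 2 ⟨Z, c⟩ + K = 0` of a circle and cancelling `1 + sin α` leaves an equation that is affine
in `sin α` and linear in `x + y`. So the four points lie on one circle as soon as there are a
vector `w` and a number `m ≠ 1` with `⟨x + y, w⟩ = m + sin α` for all four sides; the circle then
has center `w / (m - 1)` (`dist_incenter_midpoint`).

Such a `w` is explicit (`exists_vector_of_angles`). Let `α, β, γ, δ` be the half central angles of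
the sides, with sum `π`, and put `σ = (α + γ) / 2`, `D = (α - γ) / 2`, `D' = (β - δ) / 2`. The Pitot
condition says `sin σ cos D = cos σ cos D'`; call this number `X`. In the orthonormal frame turned
by the angle `σ + D + D'` from the first vertex, `w = (tan σ sin D, cot σ sin D') / 2`, and
`m = X (X² + sin² σ cos² σ - 1) / (sin² σ cos² σ)`, which is at most `0` because `X ≤ sin σ`.

The half central angles come from writing each vertex as the rotation of `A` about `E` by an angle
`2t` with `0 < t < π`. The diagonals meeting forces the parameters of `B, C, D` to be increasing or
decreasing (`exists_order`), and the second case is the first one with `B` and `D` exchanged.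
-/

open scoped RealInnerProductSpace

/-! ### Trigonometry of the half central angles -/

/-- The polynomial identities behind `exists_vector_of_angles`: here `(s, c)`, `(x, u)`, `(y, v)` are
the sine and cosine of `σ`, and the cosines and sines of `D` and `D'`, and `h` is the Pitot condition.
Two of the four sides are covered; the other two follow by changing the signs of `u` and `v`. -/
lemma pitot_identities (s c x u y v : ℝ) (hs : 0 < s) (hc : 0 < c)
    (h1 : s^2+c^2=1) (h2 : x^2+u^2=1) (h3 : y^2+v^2=1) (h : s*x = c*y) :
  2*(c*x-s*u)*(s*u/(2*c)*y - c*v/(2*s)*v) = s*x*(s^2*c^2+(s*x)^2-1)/(s^2*c^2) + (s*x+c*u) ∧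
  2*(s*y-c*v)*(c*v/(2*s)*x-s*u/(2*c)*u) = s*x*(s^2*c^2+(s*x)^2-1)/(s^2*c^2) + (c*y+s*v) := by
  have hy : y = s*x/c := by field_simp; linarith
  subst hy
  have hu : u^2 = 1 - x^2 := by linarith
  have hx : (s*x)^2 = c^2 - c^2*v^2 := by field_simp at h3; linarith
  constructor
  · field_simp
    grind
  · field_simp
    grind

/-- Existence of the vector `w = (p, q)`, for a quadrilateral inscribed in the unit circle with
vertices at the polar angles `0`, `2 t₁`, `2 t₂`, `2 t₃`. The side lengths are twice the sines in `h`. -/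
lemma exists_vector_of_angles (t₁ t₂ t₃ : ℝ) (h1 : 0 < t₁) (h2 : t₁ < t₂) (h3 : t₂ < t₃) (h4 : t₃ < Real.pi)
    (h : Real.sin t₁ + Real.sin (t₃ - t₂) = Real.sin (t₂ - t₁) + Real.sin t₃) :
    ∃ p q m : ℝ, m < 1 ∧
      (1 + Real.cos (2 * t₁)) * p + Real.sin (2 * t₁) * q = m + Real.sin t₁ ∧
      (Real.cos (2 * t₁) + Real.cos (2 * t₂)) * p + (Real.sin (2 * t₁) + Real.sin (2 * t₂)) * q
        = m + Real.sin (t₂ - t₁) ∧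
      (Real.cos (2 * t₂) + Real.cos (2 * t₃)) * p + (Real.sin (2 * t₂) + Real.sin (2 * t₃)) * q
        = m + Real.sin (t₃ - t₂) ∧
      (1 + Real.cos (2 * t₃)) * p + Real.sin (2 * t₃) * q = m + Real.sin t₃ := by
  obtain ⟨σ, D, D', rfl, rfl, rfl⟩ : ∃ σ D D' : ℝ, t₁ = σ + D ∧ t₂ = Real.pi / 2 + (D + D') ∧
      t₃ = Real.pi / 2 + (σ + D') :=
    ⟨(t₁ + t₃ - t₂) / 2, (t₁ - t₃ + t₂) / 2, (t₂ - t₁ - Real.pi + t₃) / 2, by ring, by ring,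
      by ring⟩
  have hs : 0 < Real.sin σ := Real.sin_pos_of_pos_of_lt_pi (by linarith) (by linarith)
  have hc : 0 < Real.cos σ := Real.cos_pos_of_mem_Ioo ⟨by linarith, by linarith⟩
  have e1 : Real.pi / 2 + (σ + D') - (Real.pi / 2 + (D + D')) = σ - D := by ring
  have e2 : Real.pi / 2 + (D + D') - (σ + D) = Real.pi / 2 - (σ - D') := by ring
  have hpos : 0 < Real.sin (σ + D) + Real.sin (σ - D) := by
    have := Real.sin_pos_of_pos_of_lt_pi h1 (by linarith)
    have := Real.sin_pos_of_pos_of_lt_pi (x := σ - D) (by linarith) (by linarith)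
    linarith
  rw [e1, e2, Real.sin_pi_div_two_sub, add_comm (Real.pi / 2), Real.sin_add_pi_div_two] at h
  have hX : Real.sin σ * Real.cos D = Real.cos σ * Real.cos D' := by
    simp only [Real.sin_add, Real.sin_sub, Real.cos_add, Real.cos_sub] at h
    linarith
  have hx : 0 < Real.sin σ * Real.cos D := by
    simp only [Real.sin_add, Real.sin_sub] at hpos
    linarith
  have q1 := Real.sin_sq_add_cos_sq σ
  have q2 := Real.cos_sq_add_sin_sq D
  have q3 := Real.cos_sq_add_sin_sq D'
  obtain ⟨i1, i2⟩ := pitot_identities _ _ _ (Real.sin D) _ (Real.sin D') hs hc q1 q2 q3 hX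
  -- Exchanging opposite sides changes the signs of `D` and `D'`.
  obtain ⟨i3, i4⟩ := pitot_identities _ _ _ (-Real.sin D) _ (-Real.sin D') hs hc q1 (by linarith) (by linarith) hX
  set A := Real.sin σ * Real.sin D / (2 * Real.cos σ) with hA
  set B := Real.cos σ * Real.sin D' / (2 * Real.sin σ) with hB
  set ξ := σ + D + D' with hξ
  have key (θ : ℝ) : Real.cos θ * (A * Real.cos ξ - B * Real.sin ξ) +
      Real.sin θ * (A * Real.sin ξ + B * Real.cos ξ) =
      A * Real.cos (θ - ξ) + B * Real.sin (θ - ξ) := by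
    rw [Real.cos_sub, Real.sin_sub]; ring
  have comb (φ ψ p q : ℝ) : (Real.cos φ + Real.cos ψ) * p + (Real.sin φ + Real.sin ψ) * q =
      2 * Real.cos ((φ - ψ) / 2) * (Real.cos ((φ + ψ) / 2) * p + Real.sin ((φ + ψ) / 2) * q) := by
    have := Real.sin_sub_sin φ (-ψ)
    rw [Real.cos_add_cos]
    simp only [Real.sin_neg, sub_neg_eq_add] at this
    rw [this, ← sub_eq_add_neg]; ring
  have comb0 (ψ p q : ℝ) : (1 + Real.cos ψ) * p + Real.sin ψ * q =
      2 * Real.cos (ψ / 2) * (Real.cos (ψ / 2) * p + Real.sin (ψ / 2) * q) := by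
    have := comb 0 ψ p q
    simpa [neg_div] using this
  refine ⟨A * Real.cos ξ - B * Real.sin ξ, A * Real.sin ξ + B * Real.cos ξ,
    Real.sin σ * Real.cos D * ((Real.sin σ) ^ 2 * (Real.cos σ) ^ 2 +
      (Real.sin σ * Real.cos D) ^ 2 - 1) / ((Real.sin σ) ^ 2 * (Real.cos σ) ^ 2),
    ?_, ?_, ?_, ?_, ?_⟩
  · refine lt_of_le_of_lt (div_nonpos_of_nonpos_of_nonneg
      (mul_nonpos_of_nonneg_of_nonpos hx.le ?_) (by positivity)) one_pos
    -- `X² + sin² σ cos² σ ≤ sin² σ + cos² σ = 1`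
    nlinarith [mul_nonneg (sq_nonneg (Real.sin σ)) (sq_nonneg (Real.sin D)), sq_nonneg (Real.sin σ * Real.sin σ)]
  · rw [comb0, key, show 2 * (σ + D) / 2 = σ + D by ring, show σ + D - ξ = -D' by rw [hξ]; ring,
      Real.cos_neg, Real.sin_neg, Real.cos_add, Real.sin_add]
    linear_combination i1
  · rw [comb, key, show (2 * (σ + D) - 2 * (Real.pi / 2 + (D + D'))) / 2 = -(Real.pi / 2 - (σ - D')) by ring, show (2 * (σ + D) + 2 * (Real.pi / 2 + (D + D'))) / 2 - ξ = D + Real.pi / 2 by rw [hξ]; ring, e2,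
      Real.cos_neg, Real.cos_pi_div_two_sub, Real.sin_pi_div_two_sub, Real.cos_add_pi_div_two, Real.sin_add_pi_div_two, Real.cos_sub, Real.sin_sub]
    linear_combination i2
  · rw [comb, key, show (2 * (Real.pi / 2 + (D + D')) - 2 * (Real.pi / 2 + (σ + D'))) / 2 = -(σ - D) by ring, show (2 * (Real.pi / 2 + (D + D')) + 2 * (Real.pi / 2 + (σ + D'))) / 2 - ξ = D' + Real.pi by rw [hξ]; ring, e1,
      Real.cos_neg, Real.cos_add_pi, Real.sin_add_pi, Real.cos_sub, Real.sin_sub]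
    rw [hA, hB]
    linear_combination i3
  · rw [comb0, key, show 2 * (Real.pi / 2 + (σ + D')) / 2 = σ + D' + Real.pi / 2 by ring, show σ + D' + Real.pi / 2 - ξ = Real.pi / 2 - D by rw [hξ]; ring, add_comm (Real.pi / 2),
      Real.cos_pi_div_two_sub, Real.sin_pi_div_two_sub, Real.cos_add_pi_div_two, Real.sin_add_pi_div_two, Real.cos_add, Real.sin_add]
    rw [hA, hB]
    linear_combination i4

/-- The point `(x, y)` of the unit circle, other than `(1, 0)`, has a polar angle `2 t` with
`0 < t < π`. -/
lemma exists_half_angle (x y : ℝ) (h : x^2+y^2=1) (hx : x ≠ 1) : ∃ t, 0 < t ∧ t < Real.pi ∧ x = Real.cos (2*t) ∧ y = Real.sin (2*t) := by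
  have hl : x < 1 := lt_of_le_of_ne (by nlinarith) hx
  have hm : -1 ≤ x := by nlinarith
  have ha := Real.arccos_pos.2 hl
  have hb := Real.arccos_le_pi x
  have hc := Real.cos_arccos hm hl.le
  have hsn := Real.sin_arccos x
  have h1 : 1 - x^2 = y^2 := by linarith
  rw [h1, Real.sqrt_sq_eq_abs] at hsn
  rcases le_total 0 y with hy | hy
  · refine ⟨Real.arccos x / 2, by linarith, by linarith, ?_, ?_⟩
    · rw [mul_div_cancel₀ _ two_ne_zero, hc]
    · rw [mul_div_cancel₀ _ two_ne_zero, hsn, abs_of_nonneg hy]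
  · refine ⟨Real.pi - Real.arccos x / 2, by linarith, by linarith, ?_, ?_⟩
    · rw [show 2 * (Real.pi - Real.arccos x / 2) = 2 * Real.pi - Real.arccos x by ring, Real.cos_two_pi_sub, hc]
    · rw [show 2 * (Real.pi - Real.arccos x / 2) = 2 * Real.pi - Real.arccos x by ring, Real.sin_two_pi_sub, hsn, abs_of_nonpos hy, neg_neg]

/-! ### Rotations about the circumcenter -/

lemma dist_coord (X Y : EuclideanSpace ℝ (Fin 2)) :
    dist X Y ^ 2 = (X 0 - Y 0) ^ 2 + (X 1 - Y 1) ^ 2 := by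
  rw [EuclideanSpace.dist_eq, Real.sq_sqrt (by positivity), Fin.sum_univ_two, Real.dist_eq,
    Real.dist_eq, sq_abs, sq_abs]

/-- `X` is the image of `A` under the rotation about `E` by the angle `2 * t`. -/
def IsRot (E A X : EuclideanSpace ℝ (Fin 2)) (t : ℝ) : Prop :=
  X 0 = E 0 + ((A 0 - E 0) * Real.cos (2 * t) - (A 1 - E 1) * Real.sin (2 * t)) ∧
  X 1 = E 1 + ((A 1 - E 1) * Real.cos (2 * t) + (A 0 - E 0) * Real.sin (2 * t))

lemma IsRot.refl (E A : EuclideanSpace ℝ (Fin 2)) : IsRot E A A 0 := by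
  simp [IsRot]

lemma IsRot.eq {E A X Y : EuclideanSpace ℝ (Fin 2)} {t : ℝ} (hX : IsRot E A X t)
    (hY : IsRot E A Y t) : X = Y := by
  ext i
  fin_cases i
  · exact hX.1.trans hY.1.symm
  · exact hX.2.trans hY.2.symm

lemma exists_isRot {E A X : EuclideanSpace ℝ (Fin 2)} {r : ℝ} (hr : 0 < r) (hA : dist E A = r)
    (hX : dist E X = r) (hne : X ≠ A) : ∃ t, 0 < t ∧ t < Real.pi ∧ IsRot E A X t := by
  have hA' := dist_coord E A
  have hX' := dist_coord E X
  rw [hA] at hA'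
  rw [hX] at hX'
  obtain ⟨x, hx⟩ : ∃ x, x = ((A 0 - E 0) * (X 0 - E 0) + (A 1 - E 1) * (X 1 - E 1)) / r ^ 2 :=
    ⟨_, rfl⟩
  obtain ⟨y, hy⟩ : ∃ y, y = ((A 0 - E 0) * (X 1 - E 1) - (A 1 - E 1) * (X 0 - E 0)) / r ^ 2 :=
    ⟨_, rfl⟩
  have h0 : X 0 = E 0 + ((A 0 - E 0) * x - (A 1 - E 1) * y) := by
    rw [hx, hy]; field_simp
    linear_combination (X 0 - E 0) * hA'
  have h1 : X 1 = E 1 + ((A 1 - E 1) * x + (A 0 - E 0) * y) := by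
    rw [hx, hy]; field_simp
    linear_combination (X 1 - E 1) * hA'
  have hxy : x ^ 2 + y ^ 2 = 1 := by
    have : r ^ 2 * (x ^ 2 + y ^ 2) = r ^ 2 * 1 := by
      rw [h0, h1] at hX'
      linear_combination -hX' + (x ^ 2 + y ^ 2) * hA'
    exact mul_left_cancel₀ (by positivity) this
  have hx1 : x ≠ 1 := by
    rintro rfl
    have hy0 : y = 0 := by nlinarith
    subst hy0
    apply hne
    ext i
    fin_cases i
    · simpa using h0
    · simpa using h1
  obtain ⟨t, ht0, ht1, rfl, rfl⟩ := exists_half_angle x y hxy hx1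
  exact ⟨t, ht0, ht1, h0, h1⟩

/-- Length of the chord between the vertices with parameters `s < t`. -/
lemma dist_of_isRot {E A X Y : EuclideanSpace ℝ (Fin 2)} {r s t : ℝ} (hr : 0 < r) (hA : dist E A = r)
    (hX : IsRot E A X s) (hY : IsRot E A Y t) (hst : s < t) (hst' : t - s < Real.pi) :
    dist X Y = 2 * r * Real.sin (t - s) := by
  have hA' := dist_coord E A
  rw [hA] at hA'
  have hs := Real.sin_pos_of_pos_of_lt_pi (sub_pos.2 hst) hst'
  rw [← sq_eq_sq₀ dist_nonneg (by positivity), dist_coord, hX.1, hX.2, hY.1, hY.2]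
  have e : 2 * Real.sin (t - s) ^ 2 =
      1 - (Real.cos (2 * t) * Real.cos (2 * s) + Real.sin (2 * t) * Real.sin (2 * s)) := by
    rw [← Real.cos_sub, ← mul_sub, Real.cos_two_mul, Real.cos_sq']; ring
  have e1 := Real.sin_sq_add_cos_sq (2 * s)
  have e2 := Real.sin_sq_add_cos_sq (2 * t)
  linear_combination (-2 * r ^ 2) * e - (2 - 2 * (Real.cos (2 * t) * Real.cos (2 * s) + Real.sin (2 * t) * Real.sin (2 * s))) * hA' + ((A 0 - E 0) ^ 2 + (A 1 - E 1) ^ 2) * (e1 + e2)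

/-- Twice the signed area of the inscribed triangle `AXY`; its sign tells the order of `s` and `t`. -/
lemma signed_area_of_isRot {E A X Y : EuclideanSpace ℝ (Fin 2)} {r s t : ℝ} (hA : dist E A = r)
    (hX : IsRot E A X s) (hY : IsRot E A Y t) :
    (X 0 - A 0) * (Y 1 - A 1) - (X 1 - A 1) * (Y 0 - A 0) =
      4 * r ^ 2 * (Real.sin s * Real.sin t * Real.sin (t - s)) := by
  have hA' := dist_coord E A
  rw [hA] at hA'
  rw [hX.1, hX.2, hY.1, hY.2, Real.sin_sub, Real.sin_two_mul, Real.sin_two_mul, Real.cos_two_mul,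
    Real.cos_two_mul, Real.cos_sq', Real.cos_sq', hA']
  ring

/-! ### The circle through the incenter midpoints -/

/-- `exists_vector_of_angles` carried over to an arbitrary circumcircle, for a quadrilateral whose
vertices `A, B, C, D` follow each other counterclockwise. -/
lemma exists_vector_of_isRot {A B C D E : EuclideanSpace ℝ (Fin 2)} {r t₁ t₂ t₃ : ℝ} (hr : 0 < r)
    (hA : dist E A = r) (hB : IsRot E A B t₁) (hC : IsRot E A C t₂) (hD : IsRot E A D t₃)
    (h1 : 0 < t₁) (h2 : t₁ < t₂) (h3 : t₂ < t₃) (h4 : t₃ < Real.pi)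
    (hp : dist A B + dist C D = dist B C + dist D A) :
    ∃ p q m : ℝ, m < 1 ∧
      (A 0 + B 0 - 2 * E 0) * p + (A 1 + B 1 - 2 * E 1) * q = r * m + dist A B / 2 ∧
      (B 0 + C 0 - 2 * E 0) * p + (B 1 + C 1 - 2 * E 1) * q = r * m + dist B C / 2 ∧
      (C 0 + D 0 - 2 * E 0) * p + (C 1 + D 1 - 2 * E 1) * q = r * m + dist C D / 2 ∧
      (D 0 + A 0 - 2 * E 0) * p + (D 1 + A 1 - 2 * E 1) * q = r * m + dist D A / 2 := by
  have hA' := dist_coord E A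
  rw [hA] at hA'
  have d1 := dist_of_isRot hr hA (IsRot.refl E A) hB h1 (by linarith)
  have d2 := dist_of_isRot hr hA hB hC h2 (by linarith)
  have d3 := dist_of_isRot hr hA hC hD h3 (by linarith)
  have d4 := dist_of_isRot hr hA (IsRot.refl E A) hD (by linarith) (by linarith)
  rw [sub_zero] at d1 d4
  rw [dist_comm A D] at d4
  rw [d1, d2, d3, d4] at hp
  obtain ⟨p, q, m, hm, k1, k2, k3, k4⟩ := exists_vector_of_angles t₁ t₂ t₃ h1 h2 h3 h4
    (mul_left_cancel₀ (show 2 * r ≠ 0 by positivity) (by linarith))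
  refine ⟨((A 0 - E 0) * p - (A 1 - E 1) * q) / r, ((A 1 - E 1) * p + (A 0 - E 0) * q) / r, m, hm,
    ?_, ?_, ?_, ?_⟩
  · rw [d1, hB.1, hB.2]; field_simp
    linear_combination r ^ 2 * k1 - ((1 + Real.cos (2 * t₁)) * p + Real.sin (2 * t₁) * q) * hA'
  · rw [d2, hB.1, hB.2, hC.1, hC.2]; field_simp
    linear_combination r ^ 2 * k2 - ((Real.cos (2 * t₁) + Real.cos (2 * t₂)) * p + (Real.sin (2 * t₁) + Real.sin (2 * t₂)) * q) * hA'
  · rw [d3, hC.1, hC.2, hD.1, hD.2]; field_simp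
    linear_combination r ^ 2 * k3 - ((Real.cos (2 * t₂) + Real.cos (2 * t₃)) * p + (Real.sin (2 * t₂) + Real.sin (2 * t₃)) * q) * hA'
  · rw [d4, hD.1, hD.2]; field_simp
    linear_combination r ^ 2 * k4 - ((1 + Real.cos (2 * t₃)) * p + Real.sin (2 * t₃) * q) * hA'

/-- A side `AB` for which `⟨A + B - 2 E, (p, q)⟩ = r m + |AB| / 2` has its point on a circle that
depends only on `E`, `r`, `p`, `q` and `m`. -/
lemma dist_incenter_midpoint {A B E : EuclideanSpace ℝ (Fin 2)} {r p q m : ℝ} (hr : 0 < r) (hA : dist E A = r)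
    (hB : dist E B = r) (hm : m < 1)
    (h : (A 0 + B 0 - 2 * E 0) * p + (A 1 + B 1 - 2 * E 1) * q = r * m + dist A B / 2) :
    dist (midpoint ℝ E (triangleIncenter A B E)) (E + (r / (m - 1)) • !₂[p, q]) =
      √((r / (m - 1)) ^ 2 * (p ^ 2 + q ^ 2) - (r ^ 2 / 4 + r * (r / (m - 1)) / 2)) := by
  have hd : dist A B ^ 2 + ((A 0 + B 0 - 2 * E 0) ^ 2 + (A 1 + B 1 - 2 * E 1) ^ 2) = 4 * r ^ 2 := by
    have hA' := dist_coord E A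
    have hB' := dist_coord E B
    rw [hA] at hA'
    rw [hB] at hB'
    rw [dist_coord]
    linear_combination -2 * hA' - 2 * hB'
  have hd0 : 0 ≤ dist A B := dist_nonneg
  set d := dist A B with hdd
  obtain ⟨κ, hκ⟩ : ∃ κ, κ = r / (m - 1) := ⟨_, rfl⟩
  have hκm : κ * (m - 1) = r := by
    rw [hκ]; exact div_mul_cancel₀ _ (by linarith)
  have hF (i : Fin 2) : midpoint ℝ E (triangleIncenter A B E) i =
      E i + r * (A i + B i - 2 * E i) / (2 * (2 * r + d)) := by
    have : 2 * r + d ≠ 0 := by positivity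
    rw [midpoint_eq_smul_add, triangleIncenter, dist_comm B E, dist_comm A E, hA, hB, ← hdd]
    simp only [PiLp.smul_apply, PiLp.add_apply, smul_eq_mul, invOf_eq_inv]
    rw [show r + r + d = 2 * r + d by ring]
    field_simp
    ring
  rw [← hκ, ← Real.sqrt_sq (dist_nonneg (x := midpoint ℝ E (triangleIncenter A B E))), dist_coord,
    hF, hF]
  congr 1
  simp only [PiLp.add_apply, PiLp.smul_apply, smul_eq_mul, Matrix.cons_val_zero,
    Matrix.cons_val_one]
  obtain ⟨g, hg⟩ : ∃ g, g = r / (2 * (2 * r + d)) := ⟨_, rfl⟩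
  have hg' : g * (2 * (2 * r + d)) = r := by
    rw [hg]; exact div_mul_cancel₀ _ (by positivity)
  rw [mul_div_right_comm, mul_div_right_comm, ← hg]
  linear_combination g ^ 2 * hd - 2 * g * κ * h - 2 * g * r * hκm +
    (g * (2 * r - d) / 2 - r / 4 - κ / 2) * hg'

/-- The vertices of a convex inscribed quadrilateral occur on the circle in the cyclic order
`A, B, C, D`, in one of the two orientations. -/
lemma exists_order {A B C D E : EuclideanSpace ℝ (Fin 2)} {r : ℝ} (hr : 0 < r)
    (hEA : dist E A = r) (hEB : dist E B = r) (hEC : dist E C = r) (hED : dist E D = r)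
    (hconv : ∃ P : EuclideanSpace ℝ (Fin 2), P ∈ openSegment ℝ A C ∧ P ∈ openSegment ℝ B D)
    (hAB : A ≠ B) (hBC : B ≠ C) (hDA : D ≠ A) :
    ∃ t₁ t₂ t₃ : ℝ, IsRot E A B t₁ ∧ IsRot E A C t₂ ∧ IsRot E A D t₃ ∧
      ((0 < t₁ ∧ t₁ < t₂ ∧ t₂ < t₃ ∧ t₃ < Real.pi) ∨
        (0 < t₃ ∧ t₃ < t₂ ∧ t₂ < t₁ ∧ t₁ < Real.pi)) := by
  obtain ⟨P, ⟨a, c, -, -, hac, rfl⟩, b, d, hb, hd, hbd, hP⟩ := hconv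
  have hP0 := congrArg (fun X : EuclideanSpace ℝ (Fin 2) => X 0) hP
  have hP1 := congrArg (fun X : EuclideanSpace ℝ (Fin 2) => X 1) hP
  simp only [PiLp.add_apply, PiLp.smul_apply, smul_eq_mul] at hP0 hP1
  obtain rfl : a = 1 - c := by linarith
  obtain rfl : b = 1 - d := by linarith
  -- If `C = A`, this point of the circle lies between `B` and `D`; strict convexity gives `B = D`.
  have hCA : C ≠ A := by
    rintro rfl
    have k1 := dist_coord E C
    have k2 := dist_coord E B
    have k3 := dist_coord E D
    have k4 := dist_coord B D
    rw [hEC] at k1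
    rw [hEB] at k2
    rw [hED] at k3
    have e0 : C 0 = (1 - d) * B 0 + d * D 0 := by linarith
    have e1 : C 1 = (1 - d) * B 1 + d * D 1 := by linarith
    have : (1 - d) * d * dist B D ^ 2 = 0 := by
      rw [e0, e1] at k1
      linear_combination (1 - d) * d * k4 + k1 - (1 - d) * k2 - d * k3
    have hBD : B = D := by
      have hne : (1 - d) * d ≠ 0 := by positivity
      exact dist_eq_zero.1 (pow_eq_zero_iff two_ne_zero |>.1 ((mul_eq_zero.1 this).resolve_left hne))
    subst hBD
    apply hAB
    ext i
    fin_cases i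
    · exact e0.trans (by ring : _ = B 0)
    · exact e1.trans (by ring : _ = B 1)
  obtain ⟨t₁, p1, q1, hB⟩ := exists_isRot hr hEA hEB hAB.symm
  obtain ⟨t₂, p2, q2, hC⟩ := exists_isRot hr hEA hEC hCA
  obtain ⟨t₃, p3, q3, hD⟩ := exists_isRot hr hEA hED hDA
  refine ⟨t₁, t₂, t₃, hB, hC, hD, ?_⟩
  have s1 := Real.sin_pos_of_pos_of_lt_pi p1 q1
  have s2 := Real.sin_pos_of_pos_of_lt_pi p2 q2
  have s3 := Real.sin_pos_of_pos_of_lt_pi p3 q3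
  have a1 := signed_area_of_isRot hEA hB hC
  have a3 := signed_area_of_isRot hEA hD hC
  -- `B` and `D` are on opposite sides of the line `AC`, expressed through the signed areas.
  have key : (1 - d) * Real.sin t₁ * Real.sin (t₂ - t₁) + d * Real.sin t₃ * Real.sin (t₂ - t₃) = 0 := by
    have : (4 * r ^ 2 * Real.sin t₂) * ((1 - d) * Real.sin t₁ * Real.sin (t₂ - t₁) +
        d * Real.sin t₃ * Real.sin (t₂ - t₃)) = 0 := by
      linear_combination -(1 - d) * a1 - d * a3 + (C 1 - A 1) * hP0 - (C 0 - A 0) * hP1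
    exact (mul_eq_zero.1 this).resolve_left (by positivity)
  rcases lt_trichotomy t₁ t₂ with h | h | h
  · refine Or.inl ⟨p1, h, ?_, q3⟩
    by_contra! h'
    have u1 := Real.sin_pos_of_pos_of_lt_pi (sub_pos.2 h) (by linarith)
    have u3 := Real.sin_nonneg_of_nonneg_of_le_pi (sub_nonneg.2 h') (by linarith)
    have : 0 < (1 - d) * Real.sin t₁ * Real.sin (t₂ - t₁) := by positivity
    have : 0 ≤ d * Real.sin t₃ * Real.sin (t₂ - t₃) := by positivity
    linarith
  · subst h
    exact absurd (hB.eq hC) hBC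
  · refine Or.inr ⟨p3, ?_, h, q1⟩
    by_contra! h'
    have u1 := Real.sin_pos_of_pos_of_lt_pi (sub_pos.2 h) (by linarith)
    have u3 := Real.sin_nonneg_of_nonneg_of_le_pi (sub_nonneg.2 h') (by linarith)
    rw [← neg_sub t₁ t₂, ← neg_sub t₃ t₂, Real.sin_neg, Real.sin_neg] at key
    have : 0 < (1 - d) * Real.sin t₁ * Real.sin (t₁ - t₂) := by positivity
    have : 0 ≤ d * Real.sin t₃ * Real.sin (t₃ - t₂) := by positivity
    linarith

/-- If `E` is the circumcenter (Steiner point) of a bicentric quadrilateral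
`ABCD`, then the midpoints `F`, `G`, `H`, `I` between `E` and the incenters of
the radial triangles `ABE`, `BCE`, `CDE`, `DAE` (the `X₂₁₄`-points of the
radial triangles) are concyclic. -/
theorem X214_central_quadrilateral_of_bicentric_concyclic
    (A B C D E F G H I : EuclideanSpace ℝ (Fin 2)) (r : ℝ) (hr : 0 < r)
    (hEA : dist E A = r) (hEB : dist E B = r) (hEC : dist E C = r)
    (hED : dist E D = r)
    (hconv : ∃ P : EuclideanSpace ℝ (Fin 2),
      P ∈ openSegment ℝ A C ∧ P ∈ openSegment ℝ B D)
    (hpitot : dist A B + dist C D = dist B C + dist D A)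
    (hABE : AffineIndependent ℝ ![A, B, E])
    (hBCE : AffineIndependent ℝ ![B, C, E])
    (hCDE : AffineIndependent ℝ ![C, D, E])
    (hDAE : AffineIndependent ℝ ![D, A, E])
    (hF : F = midpoint ℝ E (triangleIncenter A B E))
    (hG : G = midpoint ℝ E (triangleIncenter B C E))
    (hH : H = midpoint ℝ E (triangleIncenter C D E))
    (hI : I = midpoint ℝ E (triangleIncenter D A E)) :
    EuclideanGeometry.Concyclic ({F, G, H, I} : Set (EuclideanSpace ℝ (Fin 2))) := by
  have hne : ∀ {X Y Z : EuclideanSpace ℝ (Fin 2)}, AffineIndependent ℝ ![X, Y, Z] → X ≠ Y :=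
    fun h => by simpa using h.injective.ne (show (0 : Fin 3) ≠ 1 by decide)
  obtain ⟨t₁, t₂, t₃, hB, hC, hD, ho⟩ := exists_order hr hEA hEB hEC hED hconv
    (hne hABE) (hne hBCE) (hne hDAE)
  obtain ⟨p, q, m, hm, k1, k2, k3, k4⟩ : ∃ p q m : ℝ, m < 1 ∧
      (A 0 + B 0 - 2 * E 0) * p + (A 1 + B 1 - 2 * E 1) * q = r * m + dist A B / 2 ∧
      (B 0 + C 0 - 2 * E 0) * p + (B 1 + C 1 - 2 * E 1) * q = r * m + dist B C / 2 ∧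
      (C 0 + D 0 - 2 * E 0) * p + (C 1 + D 1 - 2 * E 1) * q = r * m + dist C D / 2 ∧
      (D 0 + A 0 - 2 * E 0) * p + (D 1 + A 1 - 2 * E 1) * q = r * m + dist D A / 2 := by
    rcases ho with ⟨h1, h2, h3, h4⟩ | ⟨h1, h2, h3, h4⟩
    · exact exists_vector_of_isRot hr hEA hB hC hD h1 h2 h3 h4 hpitot
    -- In the clockwise case, exchange `B` and `D`.
    · obtain ⟨p, q, m, hm, k1, k2, k3, k4⟩ := exists_vector_of_isRot hr hEA hD hC hB h1 h2 h3 h4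
        (by rw [dist_comm A D, dist_comm C B, dist_comm D C, dist_comm B A]; linarith)
      rw [dist_comm] at k1 k2 k3 k4
      exact ⟨p, q, m, hm, by linarith, by linarith, by linarith, by linarith⟩
  refine ⟨⟨E + (r / (m - 1)) • !₂[p, q],
    √((r / (m - 1)) ^ 2 * (p ^ 2 + q ^ 2) - (r ^ 2 / 4 + r * (r / (m - 1)) / 2)), ?_⟩,
    coplanar_of_finrank_eq_two _ (by simp)⟩
  rintro X (rfl | rfl | rfl | rfl)
  · rw [hF]; exact dist_incenter_midpoint hr hEA hEB hm k1
  · rw [hG]; exact dist_incenter_midpoint hr hEB hEC hm k2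
  · rw [hH]; exact dist_incenter_midpoint hr hEC hED hm k3
  · rw [hI]; exact dist_incenter_midpoint hr hED hEA hm k4
end

section
/- Let ABCD be a quadrilateral in the Euclidean plane and let E be a point lying strictly between B and D on the diagonal BD. Assume each of the triples (A,B,E), (B,C,E), (C,D,E), (D,A,E) is affinely independent, and let F, G, H, I be the orthocenters of the radial triangles ABE, BCE, CDE, DAE respectively. Then ⟪I - F, D - B⟫ = 0 and ⟪H - G, D - B⟫ = 0; in particular FI and GH are both perpendicular to BD, so FHGI is a trapezoid with FI ∥ GH. -/
/-! The sides `BE` and `DE` of the radial triangles both lie along `BD`. Hence the altitudes from `A`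
in `ABE` and in `DAE` are the same line, the perpendicular to `BD` through `A`, and it contains
both `F` and `I`. The perpendicular to `BD` through `C` likewise contains `G` and `H`. -/

open scoped RealInnerProductSpace

/-- A vector orthogonal to one half `BE` of the segment `BD` is orthogonal to `BD`. -/
lemma inner_sub_eq_zero_of_sbtw_left {B E D v : EuclideanSpace ℝ (Fin 2)}
    (hE : Sbtw ℝ B E D) (hv : ⟪v, B - E⟫ = 0) : ⟪v, D - B⟫ = 0 := by
  obtain ⟨⟨t, -, rfl⟩, hne, -⟩ := hE
  have ht : t ≠ 0 := by
    rintro rfl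
    simp at hne
  have h : B - AffineMap.lineMap B D t = (-t) • (D - B) := by
    rw [AffineMap.lineMap_apply_module']
    module
  rw [h, inner_smul_right] at hv
  exact (mul_eq_zero.mp hv).resolve_left (neg_ne_zero.mpr ht)

/-- A vector orthogonal to the other half `DE` of the segment `BD` is orthogonal to `BD`. -/
lemma inner_sub_eq_zero_of_sbtw_right {B E D v : EuclideanSpace ℝ (Fin 2)}
    (hE : Sbtw ℝ B E D) (hv : ⟪v, D - E⟫ = 0) : ⟪v, D - B⟫ = 0 := by
  have h := inner_sub_eq_zero_of_sbtw_left hE.symm hv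
  rw [← neg_sub D B, inner_neg_right, neg_eq_zero] at h
  exact h

/-- If `E` lies strictly between `B` and `D` on the diagonal `BD` of a
quadrilateral `ABCD`, then the orthocenters `F`, `G`, `H`, `I` of the radial
triangles `ABE`, `BCE`, `CDE`, `DAE` satisfy `FI ⟂ BD` and `GH ⟂ BD`; in
particular `FHGI` is a trapezoid with `FI ∥ GH`.  The orthocenter of triangle
`PQR` is characterized as the point `X` with `XP ⟂ QR` and `XQ ⟂ PR`. -/
theorem orthocenter_central_quadrilateral_diagonal_trapezoid
    (A B C D E F G H I : EuclideanSpace ℝ (Fin 2))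
    (hE : Sbtw ℝ B E D)
    (hABE : AffineIndependent ℝ ![A, B, E])
    (hBCE : AffineIndependent ℝ ![B, C, E])
    (hCDE : AffineIndependent ℝ ![C, D, E])
    (hDAE : AffineIndependent ℝ ![D, A, E])
    (hF : ⟪F - A, B - E⟫ = 0 ∧ ⟪F - B, A - E⟫ = 0)
    (hG : ⟪G - B, C - E⟫ = 0 ∧ ⟪G - C, B - E⟫ = 0)
    (hH : ⟪H - C, D - E⟫ = 0 ∧ ⟪H - D, C - E⟫ = 0)
    (hI : ⟪I - D, A - E⟫ = 0 ∧ ⟪I - A, D - E⟫ = 0) :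
    ⟪I - F, D - B⟫ = 0 ∧ ⟪H - G, D - B⟫ = 0 := by
  constructor
  · rw [← sub_sub_sub_cancel_right I F A, inner_sub_left,
      inner_sub_eq_zero_of_sbtw_right hE hI.2, inner_sub_eq_zero_of_sbtw_left hE hF.1, sub_zero]
  · rw [← sub_sub_sub_cancel_right H G C, inner_sub_left,
      inner_sub_eq_zero_of_sbtw_right hE hH.1, inner_sub_eq_zero_of_sbtw_left hE hG.2, sub_zero]
end

section
/- Let ABCD be a Hjelmslev quadrilateral in the Euclidean plane: ⟪A - B, C - B⟫ = 0 and ⟪A - D, C - D⟫ = 0 (right angles at B and D), with A, B, C and A, D, C each affinely independent and B ≠ D. Let M be the midpoint of BD. Then M lies on the nine-point circle of each component triangle of ABCD; concretely, the four points M, midpoint(A,B), midpoint(B,C), midpoint(C,A) are concyclic, and the four points M, midpoint(A,C), midpoint(C,D), midpoint(D,A) are concyclic. (Hence M is the Poncelet point of ABCD.) -/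
/-!
By Thales, `B` and `D` lie on the circle `Γ` with diameter `AC`; let `O` be its centre, the midpoint
of `AC`, and `r` its radius. The homothety with centre `B` and ratio `1/2` sends `Γ` to the circle
with centre the midpoint of `BO` and radius `r/2`. The images of `A`, `C`, `D` are the midpoints of
`AB`, `BC`, `BD`, and `O` itself lies on the image circle because `OB = r`. Exchanging `B` and `D`
gives the second circle. Coplanarity is automatic in the Euclidean plane.
-/

open scoped RealInnerProductSpace

/-- Thales: if `AC` subtends a right angle at `X`, then `X` is as far from the midpoint of `AC` as
`A` is. -/
lemma dist_midpoint_of_inner_eq_zero {A C X : EuclideanSpace ℝ (Fin 2)}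
    (h : ⟪A - X, C - X⟫ = 0) : dist X (midpoint ℝ A C) = dist A (midpoint ℝ A C) := by
  have h₁ : ‖(A - X) + (C - X)‖ = ‖(A - X) - (C - X)‖ :=
    (norm_sub_eq_norm_add (inner_eq_zero_symm.1 h)).symm
  have e₁ : X - midpoint ℝ A C = (-(1 / 2) : ℝ) • ((A - X) + (C - X)) := by
    rw [midpoint_eq_smul_add, invOf_eq_inv]
    module
  have e₂ : A - midpoint ℝ A C = (1 / 2 : ℝ) • ((A - X) - (C - X)) := by
    rw [midpoint_eq_smul_add, invOf_eq_inv]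
    module
  rw [dist_eq_norm, dist_eq_norm, e₁, e₂, norm_smul, norm_smul, h₁, norm_neg]

/-- The homothety with centre `B` and ratio `1/2` halves distances. -/
lemma dist_midpoint_midpoint_left (B X O : EuclideanSpace ℝ (Fin 2)) :
    dist (midpoint ℝ B X) (midpoint ℝ B O) = dist X O / 2 := by
  have e : midpoint ℝ B X - midpoint ℝ B O = (1 / 2 : ℝ) • (X - O) := by
    rw [midpoint_eq_smul_add, midpoint_eq_smul_add, invOf_eq_inv]
    module
  rw [dist_eq_norm, dist_eq_norm, e, norm_smul]
  norm_num
  ring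

/-- The midpoint of `BD` lies on the circle through the midpoints of the sides of `ABC`. -/
lemma concyclic_midpoints {A B C D : EuclideanSpace ℝ (Fin 2)}
    (hB : ⟪A - B, C - B⟫ = 0) (hD : ⟪A - D, C - D⟫ = 0) :
    EuclideanGeometry.Concyclic
      ({midpoint ℝ B D, midpoint ℝ A B, midpoint ℝ B C, midpoint ℝ C A} :
        Set (EuclideanSpace ℝ (Fin 2))) := by
  refine ⟨⟨midpoint ℝ B (midpoint ℝ A C), dist A (midpoint ℝ A C) / 2, ?_⟩, ?_⟩
  · rintro p (rfl | rfl | rfl | rfl)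
    · rw [dist_midpoint_midpoint_left, dist_midpoint_of_inner_eq_zero hD]
    · rw [midpoint_comm A B, dist_midpoint_midpoint_left]
    · rw [dist_midpoint_midpoint_left, dist_comm A, dist_midpoint_left,
        dist_comm C, dist_midpoint_right]
    · rw [midpoint_comm C A, dist_right_midpoint, dist_midpoint_of_inner_eq_zero hB,
        Real.norm_ofNat]
      ring
  · exact Coplanar.subset (Set.subset_univ _) (coplanar_of_finrank_eq_two _ (by simp))

/-- For a Hjelmslev quadrilateral `ABCD` (right angles at `B` and `D`), the
midpoint `M` of `BD` lies on the nine-point circle of each component triangle: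
`M` is concyclic with the midpoints of the sides of `ABC`, and concyclic with
the midpoints of the sides of `ACD`.  (Hence `M` is the Poncelet point of
`ABCD`.) -/
theorem midpoint_diagonal_on_ninePointCircles_of_hjelmslev
    (A B C D : EuclideanSpace ℝ (Fin 2))
    (hB : ⟪A - B, C - B⟫ = 0) (hD : ⟪A - D, C - D⟫ = 0)
    (hABC : AffineIndependent ℝ ![A, B, C])
    (hADC : AffineIndependent ℝ ![A, D, C])
    (hBD : B ≠ D) :
    EuclideanGeometry.Concyclic
      ({midpoint ℝ B D, midpoint ℝ A B, midpoint ℝ B C, midpoint ℝ C A} :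
        Set (EuclideanSpace ℝ (Fin 2))) ∧
    EuclideanGeometry.Concyclic
      ({midpoint ℝ B D, midpoint ℝ A C, midpoint ℝ C D, midpoint ℝ D A} :
        Set (EuclideanSpace ℝ (Fin 2))) := by
  refine ⟨concyclic_midpoints hB hD, ?_⟩
  convert concyclic_midpoints hD hB using 1
  rw [midpoint_comm D B, midpoint_comm D C, midpoint_comm A D, midpoint_comm C A]
  ext x
  simp only [Set.mem_insert_iff, Set.mem_singleton_iff]
  tauto
end
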